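/- arXiv:1012.5152 — 2 statements merged into one kernel-verified Lean document; each statement's English description precedes it below -/
import Mathlib

section
/- Let φ : Σ_A → ℝ be d-Hölder continuous and let L_φ be the Perron–Frobenius–Ruelle operator, (L_φ f)(ω) := Σ_{υ ∈ Σ_A, σ(υ) = ω} e^{φ(υ)} f(υ) for continuous f : Σ_A → ℝ. Then there exist a unique real number λ > 0 and a unique Borel probability measure μ on Σ_A such that ∫_{Σ_A} L_φ f dμ = λ ∫_{Σ_A} f dμ for every continuous f : Σ_A → ℝ; moreover this μ is a Gibbs measure for φ with pressure P = ln λ. -/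
open MeasureTheory Filter
open scoped ENNReal NNReal

namespace SFT

variable {l : ℕ}

/-- The one-sided subshift of finite type determined by the `l × l` matrix `A`:
infinite sequences with transitions allowed by `A`. -/
abbrev SigmaA (l : ℕ) (A : Matrix (Fin l) (Fin l) ℕ) : Type :=
  {ω : ℕ → Fin l // ∀ k, A (ω k) (ω (k + 1)) = 1}

/-- The left shift `σ` on `SigmaA l A`. -/
def shift {A : Matrix (Fin l) (Fin l) ℕ} (ω : SigmaA l A) : SigmaA l A :=
  ⟨fun n => ω.1 (n + 1), fun k => ω.2 (k + 1)⟩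

/-- Birkhoff sums `S_k φ = ∑_{m<k} φ ∘ σ^m`. -/
def birkhoff {A : Matrix (Fin l) (Fin l) ℕ} (φ : SigmaA l A → ℝ) (k : ℕ) (ω : SigmaA l A) : ℝ :=
  ∑ m ∈ Finset.range k, φ (shift^[m] ω)

/-- The matrix `A` has `0`-`1` entries and is irreducible and aperiodic
(some power of `A` has all entries strictly positive). -/
def Primitive (A : Matrix (Fin l) (Fin l) ℕ) : Prop :=
  (∀ i j, A i j = 0 ∨ A i j = 1) ∧ ∃ n : ℕ, 0 < n ∧ ∀ i j, 0 < (A ^ n) i j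

/-- A finite word is admissible, i.e. belongs to `Σ_A^*`. -/
def Admissible (A : Matrix (Fin l) (Fin l) ℕ) (x : List (Fin l)) : Prop :=
  x ≠ [] ∧ ∀ (i : ℕ) (h : i + 1 < x.length), A (x[i]'(by omega)) (x[i + 1]'h) = 1

/-- The cylinder set `[x]` of a finite word (the empty word gives all of `Σ_A`). -/
def cylinder (A : Matrix (Fin l) (Fin l) ℕ) (x : List (Fin l)) : Set (SigmaA l A) :=
  {ω | ∀ (i : ℕ) (h : i < x.length), ω.1 i = x[i]'h}

/-- The initial word `(ω_1, …, ω_k)` of `ω`. -/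
def wordPrefix {A : Matrix (Fin l) (Fin l) ℕ} (ω : SigmaA l A) (k : ℕ) : List (Fin l) :=
  List.ofFn (fun i : Fin k => ω.1 i)

/-- `μ` is a Gibbs measure for the potential `φ` with pressure `P`:
`c⁻¹ ≤ μ([ω_1,…,ω_k]) / exp(S_kφ(ω) − kP) ≤ c` for some `c > 1`. -/
def IsGibbs {A : Matrix (Fin l) (Fin l) ℕ} (φ : SigmaA l A → ℝ) (P : ℝ)
    (μ : Measure (SigmaA l A)) : Prop :=
  ∃ c : ℝ, 1 < c ∧ ∀ (ω : SigmaA l A) (k : ℕ), 0 < k →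
    c⁻¹ ≤ (μ (cylinder A (wordPrefix ω k))).toReal / Real.exp (birkhoff φ k ω - k * P) ∧
      (μ (cylinder A (wordPrefix ω k))).toReal / Real.exp (birkhoff φ k ω - k * P) ≤ c

/-- `φ` is Hölder continuous with respect to the metric `d(ω,υ) = 2^{-(ω ∧ υ)}`:
there are `C` and an exponent `s > 0` with `|φ(ω) − φ(υ)| ≤ C ⬝ d(ω,υ)^s`, i.e.
`|φ(ω) − φ(υ)| ≤ C ⬝ 2^{-sn}` whenever `ω` and `υ` agree in their first `n` coordinates. -/
def HolderCont {A : Matrix (Fin l) (Fin l) ℕ} (φ : SigmaA l A → ℝ) : Prop :=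
  ∃ C s : ℝ, 0 < s ∧ ∀ (ω υ : SigmaA l A) (n : ℕ),
    (∀ i < n, ω.1 i = υ.1 i) → |φ ω - φ υ| ≤ C * (2 : ℝ) ^ (-(s * n))

/-- Prepending a letter `a` to a sequence `ω` (an admissible preimage of `ω` under the
shift). -/
def consSeq {A : Matrix (Fin l) (Fin l) ℕ} (a : Fin l) (ω : SigmaA l A)
    (h : A a (ω.1 0) = 1) : SigmaA l A :=
  ⟨fun n => match n with
    | 0 => a
    | (k + 1) => ω.1 k,
   by
    intro k
    match k with
    | 0 => exact h
    | (m + 1) => exact ω.2 m⟩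

/-- The Perron-Frobenius-Ruelle operator `(L_φ f)(ω) = ∑_{σ(υ)=ω} e^{φ(υ)} f(υ)`. -/
noncomputable def transferOp (A : Matrix (Fin l) (Fin l) ℕ) (φ : SigmaA l A → ℝ)
    (f : SigmaA l A → ℝ) : SigmaA l A → ℝ := fun ω =>
  ∑ a : Fin l, if h : A a (ω.1 0) = 1 then
    Real.exp (φ (consSeq a ω h)) * f (consSeq a ω h) else 0

/-!
Continuity of `φ`, Bowen's condition and irreducibility of `A` give a Harnack inequality for the
iterates of `L_φ`: their values at any two points are comparable up to a uniform constant, at the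
cost of summing boundedly many consecutive iterates.

Existence: let `ρ` be the supremum of the `r` with `r g ≤ L_φ g` for some strictly positive `g`.
The Harnack inequality excludes `ρ f < L_φ f`, so the range of `L_φ - ρ` misses the open cone of
strictly positive functions. By Hahn–Banach, a positive functional vanishes on this range, and the
Riesz representation theorem turns it into an eigenmeasure.

Uniqueness: by the Harnack inequality the eigenvalue is the growth rate of `L_φ^n 1`, and any two
eigenmeasures dominate each other up to a uniform constant. Subtracting from one the largest
possible multiple of the other leaves nothing.

The Gibbs bounds come from integrating `L_φ^k` applied to the indicators of cylinders of length `k`.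
-/

section OrderedModule

variable {E : Type*} [AddCommGroup E] [PartialOrder E] [Module ℝ E]
  {L : Module.End ℝ E} {Λ Λ' : E →ₗ[ℝ] ℝ} {r : ℝ}

lemma monotone_pow (hL : Monotone L) (n : ℕ) : Monotone ⇑(L ^ n) := by
  rw [Module.End.coe_pow]
  exact hL.iterate n

/-- A positive linear functional that is an eigenvector, with eigenvalue `r`, of the dual of the
operator `L`. Positivity is encoded as monotonicity. -/
structure IsPosEigenfunctional (L : Module.End ℝ E) (r : ℝ) (Λ : E →ₗ[ℝ] ℝ) : Prop where
  monotone : Monotone Λ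
  map_apply : ∀ f, Λ (L f) = r * Λ f

namespace IsPosEigenfunctional

lemma map_pow_apply (h : IsPosEigenfunctional L r Λ) (n : ℕ) (f : E) :
    Λ ((L ^ n) f) = r ^ n * Λ f := by
  induction n with
  | zero => simp
  | succ n ih => rw [pow_succ', Module.End.mul_apply, h.map_apply, ih, pow_succ', mul_assoc]

lemma map_smul_sum_pow (h : IsPosEigenfunctional L r Λ) (K : ℝ) (M n : ℕ) (f : E) :
    Λ (K • ∑ j ∈ Finset.range M, (L ^ (j + n)) f)
      = r ^ n * (K * (∑ j ∈ Finset.range M, r ^ j) * Λ f) := by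
  simp only [map_smul, map_sum, h.map_pow_apply, smul_eq_mul, Finset.mul_sum, Finset.sum_mul]
  exact Finset.sum_congr rfl fun j _ => by ring

lemma sub_smul [IsOrderedAddMonoid E] (h : IsPosEigenfunctional L r Λ)
    (h' : IsPosEigenfunctional L r Λ') {t : ℝ} (ht : ∀ f, 0 ≤ f → t * Λ f ≤ Λ' f) :
    IsPosEigenfunctional L r (Λ' - t • Λ) where
  monotone := (monotone_iff_map_nonneg _).2 fun f hf => by simpa using ht f hf
  map_apply f := by
    simp only [LinearMap.sub_apply, LinearMap.smul_apply, h.map_apply, h'.map_apply, smul_eq_mul]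
    ring

-- For the largest `t` with `t Λ ≤ Λ'`, the domination hypothesis applied to `Λ' - t Λ` shows that
-- `t + (1 - t) / D` is admissible as well, so `t = 1`.
lemma le_of_dominated [IsOrderedAddMonoid E] {u : E} {D : ℝ} (hu : 0 ≤ u)
    (h : IsPosEigenfunctional L r Λ) (h' : IsPosEigenfunctional L r Λ')
    (hΛ : Λ u = 1) (hΛ' : Λ' u = 1)
    (hdom : ∀ Ψ, IsPosEigenfunctional L r Ψ → ∀ f, 0 ≤ f → Λ f * Ψ u ≤ D * Ψ f)
    {f : E} (hf : 0 ≤ f) : Λ f ≤ Λ' f := by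
  have hD : 0 < D := zero_lt_one.trans_le (by simpa [hΛ] using hdom Λ h u hu)
  set T : Set ℝ := {t | ∀ f, 0 ≤ f → t * Λ f ≤ Λ' f} with hT
  have hne : T.Nonempty := ⟨0, fun f hf => by simpa using h'.monotone hf⟩
  have hbdd : BddAbove T := ⟨1, fun t ht => by simpa [hΛ, hΛ'] using ht u hu⟩
  have hclosed : IsClosed T := by
    simp only [hT, Set.ofPred_forall]
    exact isClosed_iInter fun f => isClosed_iInter fun _ =>
      isClosed_le (continuous_mul_const _) continuous_const
  have hmem : sSup T ∈ T := hclosed.csSup_mem hne hbdd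
  have hgain : sSup T + (1 - sSup T) / D ∈ T := fun f hf => by
    have key := hdom _ (h.sub_smul h' hmem) f hf
    simp only [LinearMap.sub_apply, LinearMap.smul_apply, hΛ, hΛ', smul_eq_mul, mul_one] at key
    rw [← div_le_iff₀' hD] at key
    calc (sSup T + (1 - sSup T) / D) * Λ f
        = sSup T * Λ f + Λ f * (1 - sSup T) / D := by ring
      _ ≤ Λ' f := by linarith
  have hone : 1 ≤ sSup T := by
    have := le_csSup hbdd hgain
    rw [add_le_iff_nonpos_right, div_le_iff₀ hD, zero_mul] at this
    linarith
  exact (le_mul_of_one_le_left (by simpa using h.monotone hf) hone).trans (hmem f hf)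

end IsPosEigenfunctional

end OrderedModule

section ContinuousFunctions

variable {X : Type*} [TopologicalSpace X] {L : Module.End ℝ C(X, ℝ)}

lemma map_mul_map_one_le {Λ Λ' : C(X, ℝ) →ₗ[ℝ] ℝ} (hΛ : Monotone Λ) (hΛ' : Monotone Λ')
    {f g : C(X, ℝ)} (hfg : ∀ x y, f x ≤ g y) : Λ f * Λ' 1 ≤ Λ' g * Λ 1 := by
  have hf : ∀ x, f x * Λ' 1 ≤ Λ' g := fun x => by
    simpa using hΛ' (show f x • 1 ≤ g from fun y => by simpa using hfg x y)
  simpa [mul_comm] using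
    hΛ (show Λ' 1 • f ≤ Λ' g • 1 from fun x => by simpa [mul_comm] using hf x)

lemma pow_smul_le_pow_apply {r : ℝ} (hL : Monotone L) (hr : 0 ≤ r) {g : C(X, ℝ)}
    (hg : r • g ≤ L g) (n : ℕ) : r ^ n • g ≤ (L ^ n) g := by
  induction n with
  | zero => simp
  | succ n ih =>
    calc r ^ (n + 1) • g = r ^ n • r • g := by rw [pow_succ, mul_smul]
      _ ≤ r ^ n • L g := smul_le_smul_of_nonneg_left hg (pow_nonneg hr n)
      _ = L (r ^ n • g) := (map_smul L _ _).symm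
      _ ≤ L ((L ^ n) g) := hL ih
      _ = (L ^ (n + 1)) g := by rw [pow_succ', Module.End.mul_apply]

lemma pow_smul_add_le_pow_apply (hL : Monotone L) {r c δ : ℝ} {f : C(X, ℝ)} (hr : 0 ≤ r)
    (hδ : 0 ≤ δ) (hc : ∀ n, r ^ n • c • 1 ≤ (L ^ n) 1) (hf : r • (f + δ • 1) ≤ L f) (n : ℕ) :
    r ^ n • (f + (n * (δ * c)) • 1) ≤ (L ^ n) f := by
  induction n with
  | zero => simp
  | succ n ih =>
    calc r ^ (n + 1) • (f + ((n + 1 : ℕ) * (δ * c)) • 1)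
        = r • (r ^ n • (f + (n * (δ * c)) • 1) + δ • r ^ n • c • 1) := by
          push_cast
          module
      _ ≤ r • ((L ^ n) f + δ • (L ^ n) 1) := by
          gcongr
          exact hc n
      _ = (L ^ n) (r • (f + δ • 1)) := by simp only [map_smul, map_add]
      _ ≤ (L ^ n) (L f) := monotone_pow hL n hf
      _ = (L ^ (n + 1)) f := by rw [pow_succ, Module.End.mul_apply]

namespace IsPosEigenfunctional

variable {Λ Λ' : C(X, ℝ) →ₗ[ℝ] ℝ} {r r' : ℝ}

lemma eigenvalue_le {D : ℝ} (h : IsPosEigenfunctional L r Λ) (h' : IsPosEigenfunctional L r' Λ')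
    (hΛ : Λ 1 = 1) (hΛ' : Λ' 1 = 1) (hr' : 0 < r')
    (hone : ∀ n x y, (L ^ n) 1 x ≤ D * (L ^ n) 1 y) : r ≤ r' := by
  by_contra! hlt
  obtain ⟨n, hn⟩ := pow_unbounded_of_one_lt D ((one_lt_div hr').2 hlt)
  have := map_mul_map_one_le h.monotone h'.monotone (f := (L ^ n) 1) (g := D • (L ^ n) 1)
    fun x y => by simpa using hone n x y
  simp only [map_smul, h.map_pow_apply, h'.map_pow_apply, hΛ, hΛ', smul_eq_mul, mul_one] at this
  rw [div_pow, lt_div_iff₀ (pow_pos hr' n)] at hn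
  exact this.not_gt hn

lemma map_mul_map_one_le_sum {K : ℝ} {M n : ℕ} {f g : C(X, ℝ)} (h : IsPosEigenfunctional L r Λ)
    (h' : IsPosEigenfunctional L r' Λ')
    (hfg : ∀ x y, (L ^ n) f x ≤ K * ∑ j ∈ Finset.range M, (L ^ (j + n)) g y) :
    r ^ n * Λ f * Λ' 1 ≤ r' ^ n * (K * (∑ j ∈ Finset.range M, r' ^ j) * Λ' g) * Λ 1 := by
  have := map_mul_map_one_le h.monotone h'.monotone (f := (L ^ n) f)
    (g := K • ∑ j ∈ Finset.range M, (L ^ (j + n)) g) fun x y => by simpa using hfg x y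
  rwa [h.map_pow_apply, h'.map_smul_sum_pow] at this

lemma map_mul_map_one_le_mul {K : ℝ} {M : ℕ} (hr : 0 < r) (h : IsPosEigenfunctional L r Λ)
    (h' : IsPosEigenfunctional L r Λ') (hΛ : Λ 1 = 1) {f : C(X, ℝ)}
    (hf : ∀ ε > (0 : ℝ), ∃ n, ∀ x y,
      (L ^ n) f x ≤ K * ∑ j ∈ Finset.range M, (L ^ (j + n)) (f + ε • 1) y) :
    Λ f * Λ' 1 ≤ K * (∑ j ∈ Finset.range M, r ^ j) * Λ' f := by
  have hε : ∀ ε > (0 : ℝ), Λ f * Λ' 1 ≤ K * (∑ j ∈ Finset.range M, r ^ j) * (Λ' f + ε * Λ' 1) := by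
    intro ε hε
    obtain ⟨n, hn⟩ := hf ε hε
    have := h.map_mul_map_one_le_sum h' hn
    rw [hΛ, mul_one, mul_assoc, mul_le_mul_iff_right₀ (pow_pos hr n)] at this
    simpa using this
  have hlim : Tendsto (fun ε => K * (∑ j ∈ Finset.range M, r ^ j) * (Λ' f + ε * Λ' 1))
      (nhdsWithin 0 (Set.Ioi 0)) (nhds (K * (∑ j ∈ Finset.range M, r ^ j) * Λ' f)) :=
    tendsto_nhdsWithin_of_tendsto_nhds (Continuous.tendsto' (by fun_prop) _ _ (by simp))
  exact ge_of_tendsto hlim (eventually_mem_nhdsWithin.mono hε)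

lemma unique [CompactSpace X] {D K : ℝ} {M : ℕ} (hone : ∀ n x y, (L ^ n) 1 x ≤ D * (L ^ n) 1 y)
    (hloc : ∀ f, 0 ≤ f → ∀ ε > (0 : ℝ), ∃ n, ∀ x y,
      (L ^ n) f x ≤ K * ∑ j ∈ Finset.range M, (L ^ (j + n)) (f + ε • 1) y)
    (hr : 0 < r) (hr' : 0 < r') (h : IsPosEigenfunctional L r Λ)
    (h' : IsPosEigenfunctional L r' Λ') (hΛ : Λ 1 = 1) (hΛ' : Λ' 1 = 1) : r' = r ∧ Λ' = Λ := by
  obtain rfl := (h.eigenvalue_le h' hΛ hΛ' hr' hone).antisymm (h'.eigenvalue_le h hΛ' hΛ hr hone)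
  have hpos : ∀ f, 0 ≤ f → Λ' f = Λ f := fun f hf =>
    (h'.le_of_dominated zero_le_one h hΛ' hΛ
      (fun Ψ hΨ g hg => h'.map_mul_map_one_le_mul hr hΨ hΛ' (hloc g hg)) hf).antisymm
    (h.le_of_dominated zero_le_one h' hΛ hΛ'
      (fun Ψ hΨ g hg => h.map_mul_map_one_le_mul hr hΨ hΛ (hloc g hg)) hf)
  refine ⟨rfl, LinearMap.ext fun f => ?_⟩
  have := hpos (f + ‖f‖ • 1) fun x => by
    simpa using neg_le_iff_add_nonneg.1 (neg_le_of_abs_le (f.norm_coe_le_norm x))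
  simpa [hΛ, hΛ'] using this

end IsPosEigenfunctional

variable [CompactSpace X]

lemma pow_add_one_le (hL : Monotone L) (j n : ℕ) : (L ^ (j + n)) 1 ≤ ‖(L ^ j) 1‖ • (L ^ n) 1 :=
  calc (L ^ (j + n)) 1 = (L ^ n) ((L ^ j) 1) := by rw [add_comm, pow_add, Module.End.mul_apply]
    _ ≤ (L ^ n) (‖(L ^ j) 1‖ • 1) := monotone_pow hL n fun x => by
        simpa using (le_abs_self _).trans (((L ^ j) 1).norm_coe_le_norm x)
    _ = ‖(L ^ j) 1‖ • (L ^ n) 1 := map_smul _ _ _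

lemma exists_pos_smul_le (g : C(X, ℝ)) {f : C(X, ℝ)} (hf : ∀ x, 0 < f x) :
    ∃ δ : ℝ, 0 < δ ∧ δ • g ≤ f := by
  obtain ⟨m, hm, hmf⟩ := isCompact_univ.exists_forall_le' f.continuous.continuousOn fun x _ => hf x
  have hg : 0 < ‖g‖ + 1 := by positivity
  refine ⟨m / (‖g‖ + 1), by positivity, fun x => ?_⟩
  calc m / (‖g‖ + 1) * g x ≤ m / (‖g‖ + 1) * (‖g‖ + 1) := by
        gcongr
        exact ((le_abs_self _).trans (g.norm_coe_le_norm x)).trans (by linarith)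
    _ = m := div_mul_cancel₀ _ hg.ne'
    _ ≤ f x := hmf x (Set.mem_univ x)

lemma exists_monotone_functional_vanishing_on (V : Submodule ℝ C(X, ℝ))
    (hV : ∀ f ∈ V, ¬ ∀ x, 0 < f x) :
    ∃ Λ : C(X, ℝ) →ₗ[ℝ] ℝ, Monotone Λ ∧ Λ 1 = 1 ∧ ∀ f ∈ V, Λ f = 0 := by
  have hconvex : Convex ℝ {f : C(X, ℝ) | ∀ x, 0 < f x} := fun f hf g hg a b ha hb hab x => by
    have := convex_Ioi (0 : ℝ) (hf x) (hg x) ha hb hab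
    simpa using this
  have hopen : IsOpen {f : C(X, ℝ) | ∀ x, 0 < f x} := by
    simpa [Set.MapsTo] using
      ContinuousMap.isOpen_setOfPred_mapsTo (X := X) isCompact_univ (isOpen_Ioi (a := (0 : ℝ)))
  obtain ⟨Φ, u, hneg, hVu⟩ := geometric_hahn_banach_open hconvex hopen V.convex
    (Set.disjoint_left.2 fun f hf hfV => hV f hfV hf)
  have hu : u ≤ 0 := by simpa using hVu 0 V.zero_mem
  have hone : Φ 1 < 0 := (hneg 1 fun _ => zero_lt_one).trans_le hu
  have hnonpos : ∀ f, 0 ≤ f → Φ f ≤ 0 := fun f hf => by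
    by_contra! hpos
    have : Φ (f + (-Φ f / Φ 1) • 1) < u := hneg _ fun x => by
      simpa using add_pos_of_nonneg_of_pos (hf x) (div_pos_of_neg_of_neg (neg_lt_zero.2 hpos) hone)
    rw [map_add, map_smul, smul_eq_mul, div_mul_cancel₀ _ hone.ne] at this
    linarith
  have hzero : ∀ f ∈ V, Φ f = 0 := fun f hf => by
    by_contra hne
    have := hVu _ (V.smul_mem ((u - 1) / Φ f) hf)
    rw [map_smul, smul_eq_mul, div_mul_cancel₀ _ hne] at this
    linarith
  refine ⟨(Φ 1)⁻¹ • Φ.toLinearMap, (monotone_iff_map_nonneg _).2 fun f hf => ?_, ?_, fun f hf => ?_⟩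
  · exact mul_nonneg_of_nonpos_of_nonpos (inv_nonpos.2 hone.le) (hnonpos f hf)
  · exact inv_mul_cancel₀ hone.ne
  · simp [hzero f hf]

/-- The rates at which some strictly positive function is expanded by `L`; their supremum is the
Collatz–Wielandt number of `L`. -/
def expansionRates (L : Module.End ℝ C(X, ℝ)) : Set ℝ :=
  {r | ∃ g : C(X, ℝ), (∀ x, 0 < g x) ∧ r • g ≤ L g}

/-- The Collatz–Wielandt number of a positive operator, which is the candidate for its leading
eigenvalue. -/
noncomputable def collatzWielandt (L : Module.End ℝ C(X, ℝ)) : ℝ :=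
  sSup (expansionRates L)

variable [Nonempty X]

lemma exists_pow_le_of_mem_expansionRates (hL : Monotone L) {r : ℝ} (hr : 0 ≤ r)
    (hmem : r ∈ expansionRates L) : ∃ x, ∀ n, r ^ n ≤ (L ^ n) 1 x := by
  obtain ⟨g, hg, hrg⟩ := hmem
  obtain ⟨x, -, hx⟩ := isCompact_univ.exists_isMaxOn Set.univ_nonempty g.continuous.continuousOn
  refine ⟨x, fun n => le_of_mul_le_mul_right ?_ (hg x)⟩
  calc r ^ n * g x ≤ (L ^ n) g x := pow_smul_le_pow_apply hL hr hrg n x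
    _ ≤ (L ^ n) (g x • 1) x :=
      monotone_pow hL n (fun y => by simpa using hx (Set.mem_univ y)) x
    _ = (L ^ n) 1 x * g x := by rw [map_smul, ContinuousMap.smul_apply, smul_eq_mul, mul_comm]

lemma bddAbove_expansionRates (hL : Monotone L) : BddAbove (expansionRates L) := by
  refine ⟨‖L 1‖, fun r hr => ?_⟩
  rcases le_total 0 r with h0 | h0
  · obtain ⟨x, hx⟩ := exists_pow_le_of_mem_expansionRates hL h0 hr
    simpa using (hx 1).trans ((le_abs_self _).trans ((L 1).norm_coe_le_norm x))
  · exact h0.trans (norm_nonneg _)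

lemma lt_collatzWielandt (hL : Monotone L) {r : ℝ} {g : C(X, ℝ)} (hg : ∀ x, 0 < g x)
    (hrg : ∀ x, r * g x < L g x) : r < collatzWielandt L := by
  obtain ⟨δ, hδ, h⟩ := exists_pos_smul_le g (f := L g - r • g) fun x => by simpa using hrg x
  have hmem : r + δ ∈ expansionRates L := ⟨g, hg, by rwa [add_smul, add_comm, ← le_sub_iff_add_le]⟩
  exact (lt_add_of_pos_right r hδ).trans_le (le_csSup (bddAbove_expansionRates hL) hmem)

lemma collatzWielandt_pos (hL : Monotone L) (hpos : ∀ x, 0 < L 1 x) : 0 < collatzWielandt L :=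
  lt_collatzWielandt hL (g := 1) (fun _ => zero_lt_one) fun x => by simpa using hpos x

lemma collatzWielandt_pow_le (hL : Monotone L) (hpos : ∀ x, 0 < L 1 x) {D : ℝ}
    (hone : ∀ n x y, (L ^ n) 1 x ≤ D * (L ^ n) 1 y) (n : ℕ) (y : X) :
    collatzWielandt L ^ n ≤ D * (L ^ n) 1 y := by
  have hne : (expansionRates L).Nonempty :=
    let ⟨δ, _, h⟩ := exists_pos_smul_le 1 hpos
    ⟨δ, 1, fun _ => zero_lt_one, h⟩
  obtain ⟨u, -, hu, hmem⟩ := exists_seq_tendsto_sSup hne (bddAbove_expansionRates hL)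
  refine le_of_tendsto (hu.pow n) ?_
  filter_upwards [hu.eventually (lt_mem_nhds (collatzWielandt_pos hL hpos))] with k hk
  obtain ⟨x, hx⟩ := exists_pow_le_of_mem_expansionRates hL hk.le (hmem k)
  exact (hx n).trans (hone n x y)

-- Iterating `ρ f < L f` produces a strictly positive function `L ^ n f` with the same property,
-- which the maximality of `ρ` excludes.
lemma not_forall_collatzWielandt_mul_lt (hL : Monotone L) (hpos : ∀ x, 0 < L 1 x) {D : ℝ}
    (hone : ∀ n x y, (L ^ n) 1 x ≤ D * (L ^ n) 1 y) (f : C(X, ℝ)) :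
    ¬ ∀ x, collatzWielandt L * f x < L f x := by
  intro hf
  set ρ := collatzWielandt L
  have hρ : 0 < ρ := collatzWielandt_pos hL hpos
  obtain ⟨x₀⟩ := ‹Nonempty X›
  have hD : 0 < D := zero_lt_one.trans_le (by simpa using hone 0 x₀ x₀)
  have hc : ∀ n, ρ ^ n • D⁻¹ • (1 : C(X, ℝ)) ≤ (L ^ n) 1 := fun n x => by
    simpa [← div_eq_mul_inv, div_le_iff₀' hD] using collatzWielandt_pow_le hL hpos hone n x
  obtain ⟨δ, hδ, hδf⟩ := exists_pos_smul_le (ρ • 1) (f := L f - ρ • f) fun x => by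
    simpa using hf x
  have hstep : ρ • (f + δ • 1) ≤ L f := by
    rw [smul_add, smul_comm ρ δ, add_comm]
    exact le_sub_iff_add_le.1 hδf
  have hgrow := pow_smul_add_le_pow_apply hL hρ.le hδ.le hc hstep
  obtain ⟨n, hn⟩ := exists_nat_gt (‖f‖ / (δ * D⁻¹))
  rw [div_lt_iff₀ (by positivity)] at hn
  refine (lt_collatzWielandt hL (r := ρ) (g := (L ^ n) f) (fun x => ?_) fun x => ?_).false
  · refine lt_of_lt_of_le (mul_pos (pow_pos hρ n) ?_) (hgrow n x)
    have := neg_le_of_abs_le (f.norm_coe_le_norm x)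
    simpa using by linarith
  · have h1 : 0 < (L ^ n) 1 x := (show 0 < (ρ ^ n • D⁻¹ • (1 : C(X, ℝ))) x by
      simpa using mul_pos (pow_pos hρ n) (inv_pos.2 hD)).trans_le (hc n x)
    calc ρ * (L ^ n) f x < ρ * ((L ^ n) f x + δ * (L ^ n) 1 x) := by
          gcongr
          exact lt_add_of_pos_right _ (by positivity)
      _ = (L ^ n) (ρ • (f + δ • 1)) x := by simp [mul_add]
      _ ≤ (L ^ n) (L f) x := monotone_pow hL n hstep x
      _ = L ((L ^ n) f) x := by
          rw [← Module.End.mul_apply, ← pow_succ, pow_succ', Module.End.mul_apply]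

lemma exists_isPosEigenfunctional (hL : Monotone L) (hpos : ∀ x, 0 < L 1 x) {D : ℝ}
    (hone : ∀ n x y, (L ^ n) 1 x ≤ D * (L ^ n) 1 y) :
    ∃ r > 0, ∃ Λ, IsPosEigenfunctional L r Λ ∧ Λ 1 = 1 := by
  obtain ⟨Λ, hmono, hΛ, hker⟩ := exists_monotone_functional_vanishing_on
    (LinearMap.range (L - collatzWielandt L • 1)) (by
      rintro _ ⟨f, rfl⟩ hf
      exact not_forall_collatzWielandt_mul_lt hL hpos hone f fun x => by simpa using hf x)
  refine ⟨_, collatzWielandt_pos hL hpos, Λ, ⟨hmono, fun f => ?_⟩, hΛ⟩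
  simpa [sub_eq_zero] using hker _ (LinearMap.mem_range_self _ f)

end ContinuousFunctions

variable {A : Matrix (Fin l) (Fin l) ℕ} {φ : SigmaA l A → ℝ}

section Subshift

lemma consSeq_shift (ω : SigmaA l A) : consSeq (ω.1 0) (shift ω) (ω.2 0) = ω :=
  Subtype.ext (funext fun n => by cases n <;> rfl)

lemma iterate_shift_apply (m : ℕ) (ω : SigmaA l A) (i : ℕ) :
    (shift^[m] ω).1 i = ω.1 (m + i) := by
  induction m generalizing ω with
  | zero => simp
  | succ m ih =>
    rw [Function.iterate_succ_apply, ih, Nat.succ_add]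
    rfl

lemma consSeq_mem_cylinder {ω υ : SigmaA l A} {n : ℕ} (h : ω.1 ∈ PiNat.cylinder υ.1 n)
    {a : Fin l} (hω : A a (ω.1 0) = 1) (hυ : A a (υ.1 0) = 1) :
    (consSeq a ω hω).1 ∈ PiNat.cylinder (consSeq a υ hυ).1 (n + 1)
  | 0, _ => rfl
  | i + 1, hi => h i (Nat.lt_of_succ_lt_succ hi)

lemma birkhoff_succ (n : ℕ) (ω : SigmaA l A) :
    birkhoff φ (n + 1) ω = φ ω + birkhoff φ n (shift ω) :=
  birkhoffSum_succ' shift φ n ω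

lemma neg_mul_le_birkhoff {B : ℝ} (hB : ∀ ω, |φ ω| ≤ B) (n : ℕ) (ω : SigmaA l A) :
    -(n * B) ≤ birkhoff φ n ω := by
  simpa [birkhoff] using
    Finset.card_nsmul_le_sum (Finset.range n) _ (-B) fun m _ => neg_le_of_abs_le (hB (shift^[m] ω))

/-- Irreducibility of a `0`-`1` transition matrix. The weaker form of `Primitive` in which the
connecting time may depend on the pair of letters. -/
def IsIrreducible (A : Matrix (Fin l) (Fin l) ℕ) : Prop :=
  (∀ i j, A i j = 0 ∨ A i j = 1) ∧ ∀ i j, ∃ n : ℕ, 0 < n ∧ 0 < (A ^ n) i j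

lemma Primitive.isIrreducible (hA : Primitive A) : IsIrreducible A :=
  let ⟨n, hn, hpos⟩ := hA.2
  ⟨hA.1, fun i j => ⟨n, hn, hpos i j⟩⟩

namespace IsIrreducible

lemma exists_pow_succ_pos (hA : IsIrreducible A) (i j : Fin l) : ∃ n, 0 < (A ^ (n + 1)) i j := by
  obtain ⟨n, hn, hpos⟩ := hA.2 i j
  exact ⟨n - 1, by rwa [Nat.sub_add_cancel hn]⟩

lemma exists_eq_one_of_pow_succ_pos (hA : IsIrreducible A) {n : ℕ} {i j : Fin l}
    (h : 0 < (A ^ (n + 1)) i j) : ∃ k, A i k = 1 ∧ 0 < (A ^ n) k j := by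
  rw [pow_succ', Matrix.mul_apply] at h
  obtain ⟨k, -, hk⟩ := Finset.exists_ne_zero_of_sum_ne_zero h.ne'
  exact ⟨k, (hA.1 i k).resolve_left (left_ne_zero_of_mul hk),
    Nat.pos_of_ne_zero (right_ne_zero_of_mul hk)⟩

lemma nonempty_sigmaA (hA : IsIrreducible A) (hl : 0 < l) : Nonempty (SigmaA l A) := by
  have hnext : ∀ i, ∃ j, A i j = 1 := fun i =>
    let ⟨_, hn⟩ := hA.exists_pow_succ_pos i i
    (hA.exists_eq_one_of_pow_succ_pos hn).imp fun _ => And.left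
  choose next hnext using hnext
  exact ⟨⟨fun k => next^[k] ⟨0, hl⟩, fun k =>
    (congrArg (A _) (Function.iterate_succ_apply' next k _)).trans (hnext _)⟩⟩

lemma exists_iterate_shift_eq (hA : IsIrreducible A) {n : ℕ} {i : Fin l} {υ : SigmaA l A}
    (h : 0 < (A ^ n) i (υ.1 0)) : ∃ ω : SigmaA l A, ω.1 0 = i ∧ shift^[n] ω = υ := by
  induction n generalizing i with
  | zero =>
    rw [pow_zero, Matrix.one_apply] at h
    exact ⟨υ, by_contra fun hne => by simp [Ne.symm hne] at h, rfl⟩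
  | succ n ih =>
    obtain ⟨k, hik, hk⟩ := hA.exists_eq_one_of_pow_succ_pos h
    obtain ⟨ω, rfl, hω⟩ := ih hk
    exact ⟨consSeq i ω hik, rfl, hω⟩

lemma surjective_shift (hA : IsIrreducible A) : Function.Surjective (shift (A := A)) := fun υ => by
  obtain ⟨n, hn⟩ := hA.exists_pow_succ_pos (υ.1 0) (υ.1 0)
  obtain ⟨ω, -, hω⟩ := hA.exists_iterate_shift_eq hn
  exact ⟨shift^[n] ω, by rw [← hω, Function.iterate_succ_apply']⟩

lemma exists_iterate_shift_eq_lt (hA : IsIrreducible A) :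
    ∃ M, ∀ (i : Fin l) (υ : SigmaA l A), ∃ j < M, ∃ ω : SigmaA l A,
      ω.1 0 = i ∧ shift^[j] ω = υ := by
  choose n _ hn using hA.2
  obtain ⟨M, hM⟩ := Finite.bddAbove_range (Function.uncurry n)
  exact ⟨M + 1, fun i υ => ⟨n i (υ.1 0), Nat.lt_succ_of_le (hM ⟨(i, υ.1 0), rfl⟩),
    hA.exists_iterate_shift_eq (hn i (υ.1 0))⟩⟩

end IsIrreducible

end Subshift

section Topology

lemma continuous_coord (n : ℕ) : Continuous fun ω : SigmaA l A => ω.1 n :=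
  (continuous_apply n).comp continuous_subtype_val

instance compactSpace_sigmaA : CompactSpace (SigmaA l A) := by
  refine (isCompact_iff_compactSpace
    (s := {ω : ℕ → Fin l | ∀ k, A (ω k) (ω (k + 1)) = 1})).1 (IsClosed.isCompact ?_)
  rw [Set.ofPred_forall]
  exact isClosed_iInter fun k => (isClosed_discrete {p : Fin l × Fin l | A p.1 p.2 = 1}).preimage
    (f := fun ω : ℕ → Fin l => (ω k, ω (k + 1))) (by fun_prop)

instance metrizableSpace_sigmaA : TopologicalSpace.MetrizableSpace (SigmaA l A) :=
  let _ := PiNat.metricSpace (E := fun _ => Fin l)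
  inferInstance

lemma isClopen_cylinder (ω : SigmaA l A) (n : ℕ) :
    IsClopen (Subtype.val ⁻¹' PiNat.cylinder ω.1 n : Set (SigmaA l A)) := by
  rw [PiNat.cylinder_eq_pi, Set.pi_def, Set.preimage_iInter₂]
  exact Set.Finite.isClopen_biInter (Finset.finite_toSet _) fun i _ =>
    (isClopen_discrete {ω.1 i}).preimage (continuous_coord i)

lemma HolderCont.continuous (hφ : HolderCont φ) : Continuous φ := by
  obtain ⟨C, s, hs, hC⟩ := hφ
  refine continuous_iff_continuousAt.2 fun ω => Metric.tendsto_nhds.2 fun ε hε => ?_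
  have hlim : Tendsto (fun n : ℕ => C * (2 : ℝ) ^ (-(s * n))) atTop (nhds 0) := by
    have := tendsto_pow_atTop_nhds_zero_of_lt_one (Real.rpow_nonneg zero_le_two (-s))
      (Real.rpow_lt_one_of_one_lt_of_neg one_lt_two (neg_lt_zero.2 hs))
    simpa [Real.rpow_mul_natCast, ← neg_mul] using this.const_mul C
  obtain ⟨n, hn⟩ := (hlim.eventually_lt_const hε).exists
  filter_upwards [(isClopen_cylinder ω n).isOpen.mem_nhds (PiNat.self_mem_cylinder ω.1 n)] with υ hυ
  exact (hC υ ω n hυ).trans_lt hn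

lemma exists_forall_mem_cylinder_le_add {f : SigmaA l A → ℝ} (hf : Continuous f) {ε : ℝ}
    (hε : 0 < ε) : ∃ n, ∀ ω υ, ω.1 ∈ PiNat.cylinder υ.1 (n + 1) → f ω ≤ f υ + ε := by
  let _ := PiNat.metricSpace (E := fun _ => Fin l)
  obtain ⟨δ, hδ, h⟩ :=
    Metric.uniformContinuous_iff.1 (CompactSpace.uniformContinuous_of_continuous hf) ε hε
  obtain ⟨n, hn⟩ := exists_pow_lt_of_lt_one hδ one_half_lt_one
  refine ⟨n, fun ω υ hmem => ?_⟩
  have hdist : dist ω υ < δ :=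
    (PiNat.mem_cylinder_iff_dist_le.1 (PiNat.cylinder_anti υ.1 n.le_succ hmem)).trans_lt hn
  have := (le_abs_self _).trans_lt (h hdist)
  linarith

end Topology

section TransferOperator

lemma transferOp_mono : Monotone (transferOp A φ) := fun f g h ω => by
  unfold transferOp
  gcongr with a
  split_ifs with ha
  · gcongr
    exact h _
  · rfl

lemma transferOp_add (f g : SigmaA l A → ℝ) :
    transferOp A φ (f + g) = transferOp A φ f + transferOp A φ g := by
  ext ω
  simp only [transferOp, Pi.add_apply, ← Finset.sum_add_distrib]
  exact Finset.sum_congr rfl fun a _ => by split_ifs <;> ring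

lemma transferOp_smul (c : ℝ) (f : SigmaA l A → ℝ) :
    transferOp A φ (c • f) = c • transferOp A φ f := by
  ext ω
  simp [transferOp, Finset.mul_sum, mul_left_comm]

lemma iterate_transferOp_smul (n : ℕ) (c : ℝ) (f : SigmaA l A → ℝ) :
    (transferOp A φ)^[n] (c • f) = c • (transferOp A φ)^[n] f :=
  Function.Commute.iterate_left (g := (c • ·)) (transferOp_smul c) n f

lemma iterate_transferOp_nonneg (n : ℕ) {f : SigmaA l A → ℝ} (hf : 0 ≤ f) :
    0 ≤ (transferOp A φ)^[n] f := by
  have h0 : (transferOp A φ)^[n] 0 = 0 := by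
    simpa using iterate_transferOp_smul n 0 (0 : SigmaA l A → ℝ)
  exact h0.symm.trans_le (transferOp_mono.iterate n hf)

lemma exp_mul_le_transferOp_shift {f : SigmaA l A → ℝ} (hf : 0 ≤ f) (ω : SigmaA l A) :
    Real.exp (φ ω) * f ω ≤ transferOp A φ f (shift ω) := by
  have hterm : ∀ a ∈ Finset.univ, 0 ≤ if h : A a ((shift ω).1 0) = 1 then
      Real.exp (φ (consSeq a (shift ω) h)) * f (consSeq a (shift ω) h) else 0 := fun a _ => by
    split_ifs
    exacts [mul_nonneg (Real.exp_pos _).le (hf _), le_rfl]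
  refine le_trans ?_ (Finset.single_le_sum hterm (Finset.mem_univ (ω.1 0)))
  exact ((dif_pos (ω.2 0)).trans (by rw [consSeq_shift])).ge

lemma exp_birkhoff_mul_le_iterate_transferOp {f : SigmaA l A → ℝ} (hf : 0 ≤ f) (n : ℕ)
    (ω : SigmaA l A) :
    Real.exp (birkhoff φ n ω) * f ω ≤ (transferOp A φ)^[n] f (shift^[n] ω) := by
  induction n generalizing f ω with
  | zero => simp [birkhoff]
  | succ n ih =>
    calc Real.exp (birkhoff φ (n + 1) ω) * f ω
        = Real.exp (birkhoff φ n (shift ω)) * (Real.exp (φ ω) * f ω) := by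
          rw [birkhoff_succ, add_comm, Real.exp_add, mul_assoc]
      _ ≤ Real.exp (birkhoff φ n (shift ω)) * transferOp A φ f (shift ω) := by
          gcongr
          exact exp_mul_le_transferOp_shift hf ω
      _ ≤ (transferOp A φ)^[n + 1] f (shift^[n + 1] ω) :=
          ih (iterate_transferOp_nonneg 1 hf) (shift ω)

lemma transferOp_eq_transferOp_zero (f : SigmaA l A → ℝ) :
    transferOp A φ f = transferOp A 0 fun ω => Real.exp (φ ω) * f ω := by
  ext ω
  simp [transferOp]

lemma transferOp_zero_comp_shift_mul (f g : SigmaA l A → ℝ) :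
    transferOp A 0 (fun ω => g (shift ω) * f ω) = fun ω => g ω * transferOp A 0 f ω := by
  ext ω
  simp only [transferOp, Finset.mul_sum, mul_dite, mul_zero, mul_left_comm (g ω)]
  rfl

lemma iterate_transferOp_eq_iterate_transferOp_zero (n : ℕ) (f : SigmaA l A → ℝ) :
    (transferOp A φ)^[n] f
      = (transferOp A 0)^[n] fun ω => Real.exp (birkhoff φ n ω) * f ω := by
  induction n generalizing f with
  | zero => simp [birkhoff]
  | succ n ih =>
    rw [Function.iterate_succ_apply, Function.iterate_succ_apply, ih, transferOp_eq_transferOp_zero,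
      ← transferOp_zero_comp_shift_mul]
    simp only [birkhoff_succ, Real.exp_add, mul_left_comm, mul_assoc]

lemma iterate_transferOp_zero_le {n : ℕ} {F G : SigmaA l A → ℝ}
    (h : ∀ ω υ, ω.1 ∈ PiNat.cylinder υ.1 (n + 1) → F ω ≤ G υ) {ω υ : SigmaA l A}
    (hωυ : ω.1 0 = υ.1 0) : (transferOp A 0)^[n] F ω ≤ (transferOp A 0)^[n] G υ := by
  induction n generalizing F G with
  | zero => exact h ω υ fun i hi => by rwa [Nat.lt_one_iff.1 hi]
  | succ n ih =>
    refine ih fun ω υ hmem => Finset.sum_le_sum fun a _ => ?_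
    have h0 : ω.1 0 = υ.1 0 := hmem 0 n.succ_pos
    by_cases ha : A a (υ.1 0) = 1
    · rw [dif_pos (h0 ▸ ha), dif_pos ha]
      simpa using h _ _ (consSeq_mem_cylinder hmem (h0 ▸ ha) ha)
    · rw [dif_neg (h0 ▸ ha), dif_neg ha]

lemma transferOp_zero_indicator_le (ω : SigmaA l A) (n : ℕ) :
    transferOp A 0 ((Subtype.val ⁻¹' PiNat.cylinder ω.1 (n + 1)).indicator 1)
      ≤ (Subtype.val ⁻¹' PiNat.cylinder (shift ω).1 n).indicator 1 := fun υ => by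
  calc transferOp A 0 ((Subtype.val ⁻¹' PiNat.cylinder ω.1 (n + 1)).indicator 1) υ
      ≤ ∑ a, if a = ω.1 0 then
          (Subtype.val ⁻¹' PiNat.cylinder (shift ω).1 n).indicator 1 υ else 0 := by
        refine Finset.sum_le_sum fun a _ => ?_
        have hnn : 0 ≤ (Subtype.val ⁻¹' PiNat.cylinder (shift ω).1 n).indicator
          (1 : SigmaA l A → ℝ) υ := Set.indicator_nonneg (fun _ _ => zero_le_one) υ
        split_ifs with h ha ha
        · by_cases hmem : (consSeq a υ h).1 ∈ PiNat.cylinder ω.1 (n + 1)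
          · have : υ.1 ∈ PiNat.cylinder (shift ω).1 n := fun i hi => hmem (i + 1) (by omega)
            simp [Set.indicator, hmem, this]
          · simpa [Set.indicator, hmem] using hnn
        · have : (consSeq a υ h).1 ∉ PiNat.cylinder ω.1 (n + 1) := fun hmem =>
            ha (hmem 0 n.succ_pos)
          simp [Set.indicator, this]
        · exact hnn
        · rfl
    _ = _ := by simp

lemma iterate_transferOp_zero_indicator_le_one (n : ℕ) (ω : SigmaA l A) :
    (transferOp A 0)^[n] ((Subtype.val ⁻¹' PiNat.cylinder ω.1 n).indicator 1) ≤ 1 := by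
  induction n generalizing ω with
  | zero => exact Set.indicator_le_self' fun _ _ => zero_le_one
  | succ n ih =>
    exact (transferOp_mono.iterate n (transferOp_zero_indicator_le ω n)).trans (ih (shift ω))

end TransferOperator

section BoundedDistortion

/-- Bowen's condition with constant `V`: the Birkhoff sums of `φ` vary by at most `V` over each
cylinder. As the roles of `ω` and `υ` can be exchanged, a one-sided bound suffices. -/
def BowenCondition (φ : SigmaA l A → ℝ) (V : ℝ) : Prop :=
  ∀ (n : ℕ) (ω υ : SigmaA l A), ω.1 ∈ PiNat.cylinder υ.1 n → birkhoff φ n ω ≤ V + birkhoff φ n υ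

lemma HolderCont.exists_bowenCondition (hφ : HolderCont φ) : ∃ V, BowenCondition φ V := by
  obtain ⟨C, s, hs, hC⟩ := hφ
  have hq0 : 0 ≤ (2 : ℝ) ^ (-s) := by positivity
  have hq1 : (2 : ℝ) ^ (-s) < 1 :=
    Real.rpow_lt_one_of_one_lt_of_neg one_lt_two (neg_lt_zero.2 hs)
  refine ⟨|C| * (1 - (2 : ℝ) ^ (-s))⁻¹, fun n ω υ hmem => ?_⟩
  have hterm : ∀ m ∈ Finset.range n,
      φ (shift^[m] ω) - φ (shift^[m] υ) ≤ |C| * ((2 : ℝ) ^ (-s)) ^ (n - 1 - m) := fun m _ => by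
    refine (le_abs_self _).trans ((hC _ _ (n - 1 - m) fun i hi => ?_).trans ?_)
    · rw [iterate_shift_apply, iterate_shift_apply]
      exact hmem (m + i) (by omega)
    · rw [← neg_mul, Real.rpow_mul_natCast zero_le_two]
      gcongr
      exact le_abs_self C
  rw [← sub_le_iff_le_add]
  calc birkhoff φ n ω - birkhoff φ n υ
      = ∑ m ∈ Finset.range n, (φ (shift^[m] ω) - φ (shift^[m] υ)) :=
        (Finset.sum_sub_distrib _ _).symm
    _ ≤ ∑ m ∈ Finset.range n, |C| * ((2 : ℝ) ^ (-s)) ^ (n - 1 - m) := Finset.sum_le_sum hterm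
    _ = |C| * ∑ m ∈ Finset.range n, ((2 : ℝ) ^ (-s)) ^ m := by
        rw [← Finset.mul_sum, Finset.sum_range_reflect]
    _ ≤ |C| * (1 - (2 : ℝ) ^ (-s))⁻¹ := by
        gcongr
        rw [← tsum_geometric_of_lt_one hq0 hq1]
        exact (summable_geometric_of_lt_one hq0 hq1).sum_le_tsum _ fun m _ => pow_nonneg hq0 m

/-- A Harnack inequality for the iterates of the transfer operator, with constants `K` and `M`.
Since the matrix need not be aperiodic, the upper bound involves `M` consecutive iterates. -/
def HarnackInequality (φ : SigmaA l A → ℝ) (K : ℝ) (M : ℕ) : Prop :=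
  ∀ (n : ℕ) (f g : SigmaA l A → ℝ), 0 ≤ g →
    (∀ ω υ, ω.1 ∈ PiNat.cylinder υ.1 (n + 1) → f ω ≤ g υ) → ∀ ω υ,
      (transferOp A φ)^[n] f ω ≤ K * ∑ j ∈ Finset.range M, (transferOp A φ)^[j + n] g υ

namespace BowenCondition

variable {V : ℝ}

lemma iterate_transferOp_le (hV : BowenCondition φ V) {n : ℕ} {f g : SigmaA l A → ℝ} (hg : 0 ≤ g)
    (h : ∀ ω υ, ω.1 ∈ PiNat.cylinder υ.1 (n + 1) → f ω ≤ g υ) {ω υ : SigmaA l A}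
    (hωυ : ω.1 0 = υ.1 0) :
    (transferOp A φ)^[n] f ω ≤ Real.exp V * (transferOp A φ)^[n] g υ := by
  rw [← smul_eq_mul, ← Pi.smul_apply, ← iterate_transferOp_smul,
    iterate_transferOp_eq_iterate_transferOp_zero n f,
    iterate_transferOp_eq_iterate_transferOp_zero n (Real.exp V • g)]
  refine iterate_transferOp_zero_le (fun ω υ hmem => ?_) hωυ
  have hb := Real.exp_le_exp.2 (hV n ω υ (PiNat.cylinder_anti υ.1 n.le_succ hmem))
  calc Real.exp (birkhoff φ n ω) * f ω
      ≤ Real.exp (V + birkhoff φ n υ) * g υ :=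
        mul_le_mul_of_nonneg hb (h ω υ hmem) (Real.exp_pos _).le (hg υ)
    _ = Real.exp (birkhoff φ n υ) * (Real.exp V • g) υ := by
        rw [Real.exp_add, Pi.smul_apply, smul_eq_mul, mul_left_comm, mul_assoc]

lemma iterate_transferOp_indicator_le (hV : BowenCondition φ V) (n : ℕ) (ω υ : SigmaA l A) :
    (transferOp A φ)^[n] ((Subtype.val ⁻¹' PiNat.cylinder ω.1 n).indicator 1) υ
      ≤ Real.exp V * Real.exp (birkhoff φ n ω) := by
  have hle : (fun υ => Real.exp (birkhoff φ n υ) *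
        (Subtype.val ⁻¹' PiNat.cylinder ω.1 n).indicator 1 υ)
      ≤ (Real.exp V * Real.exp (birkhoff φ n ω)) •
        (Subtype.val ⁻¹' PiNat.cylinder ω.1 n).indicator 1 := fun υ => by
    by_cases hmem : υ.1 ∈ PiNat.cylinder ω.1 n
    · simpa [Set.indicator, hmem, ← Real.exp_add] using hV n υ ω hmem
    · simp [Set.indicator, hmem]
  calc _ ≤ (Real.exp V * Real.exp (birkhoff φ n ω)) •
        (transferOp A 0)^[n] ((Subtype.val ⁻¹' PiNat.cylinder ω.1 n).indicator 1) υ := by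
        rw [iterate_transferOp_eq_iterate_transferOp_zero, ← Pi.smul_apply,
          ← iterate_transferOp_smul]
        exact transferOp_mono.iterate n hle υ
    _ ≤ Real.exp V * Real.exp (birkhoff φ n ω) :=
        mul_le_of_le_one_right (by positivity) (iterate_transferOp_zero_indicator_le_one n ω υ)

-- Replacing `υ` by a preimage under `σ^j`, `j < M`, with the first letter of `ω` costs at most the
-- factor `exp (M * B)`.
lemma exists_harnackInequality (hV : BowenCondition φ V) (hA : IsIrreducible A)
    (hφ : Continuous φ) : ∃ K M, HarnackInequality φ K M := by
  obtain ⟨B, hB⟩ := isCompact_univ.exists_bound_of_continuousOn hφ.continuousOn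
  replace hB : ∀ ω, |φ ω| ≤ B := fun ω => hB ω (Set.mem_univ ω)
  obtain ⟨M, hM⟩ := hA.exists_iterate_shift_eq_lt
  refine ⟨Real.exp (V + M * B), M, fun n f g hg hfg ω υ => ?_⟩
  obtain ⟨j, hj, ζ, hζ, rfl⟩ := hM (ω.1 0) υ
  have hB0 : 0 ≤ B := (abs_nonneg _).trans (hB ω)
  have hexp : Real.exp V ≤ Real.exp (V + M * B) * Real.exp (birkhoff φ j ζ) := by
    rw [← Real.exp_add, Real.exp_le_exp]
    have : (j : ℝ) * B ≤ M * B := by gcongr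
    linarith [neg_mul_le_birkhoff hB j ζ]
  calc (transferOp A φ)^[n] f ω
      ≤ Real.exp V * (transferOp A φ)^[n] g ζ := hV.iterate_transferOp_le hg hfg hζ.symm
    _ ≤ Real.exp (V + M * B) * Real.exp (birkhoff φ j ζ) * (transferOp A φ)^[n] g ζ :=
        mul_le_mul_of_nonneg_right hexp (iterate_transferOp_nonneg n hg ζ)
    _ ≤ Real.exp (V + M * B) * (transferOp A φ)^[j + n] g (shift^[j] ζ) := by
        rw [mul_assoc, Function.iterate_add_apply]
        gcongr
        exact exp_birkhoff_mul_le_iterate_transferOp (iterate_transferOp_nonneg n hg) j ζ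
    _ ≤ _ := by
        gcongr
        exact Finset.single_le_sum (f := fun j => (transferOp A φ)^[j + n] g (shift^[_] ζ))
          (fun i _ => iterate_transferOp_nonneg (i + n) hg _) (Finset.mem_range.2 hj)

end BowenCondition

end BoundedDistortion

section ContinuousTransferOperator

lemma continuous_transferOp (hφ : Continuous φ) {f : SigmaA l A → ℝ} (hf : Continuous f) :
    Continuous (transferOp A φ f) := by
  refine continuous_finsetSum _ fun a _ => ?_
  have hclopen : IsClopen {ω : SigmaA l A | A a (ω.1 0) = 1} :=
    (isClopen_discrete {b | A a b = 1}).preimage (continuous_coord 0)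
  have hcons : Continuous fun ω : {ω : SigmaA l A // A a (ω.1 0) = 1} => consSeq a ω.1 ω.2 :=
    Continuous.subtype_mk (continuous_pi fun
      | 0 => continuous_const
      | n + 1 => (continuous_coord n).comp continuous_subtype_val) _
  rw [← continuousOn_univ, ← Set.union_compl_self {ω : SigmaA l A | A a (ω.1 0) = 1}]
  refine ContinuousOn.union_of_isOpen ?_ ?_ hclopen.isOpen hclopen.compl.isOpen
  · rw [continuousOn_iff_continuous_domRestrict]
    refine ((Real.continuous_exp.comp (hφ.comp hcons)).mul (hf.comp hcons)).congr fun ω => ?_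
    rw [Set.domRestrict_apply, dif_pos ω.2]
    rfl
  · exact continuousOn_const.congr fun ω hω => dif_neg hω

/-- The transfer operator as an endomorphism of the space of continuous functions. -/
noncomputable def transferEnd (hφ : Continuous φ) : Module.End ℝ C(SigmaA l A, ℝ) where
  toFun f := ⟨transferOp A φ f, continuous_transferOp hφ f.continuous⟩
  map_add' f g := DFunLike.coe_injective (transferOp_add (φ := φ) f g)
  map_smul' c f := DFunLike.coe_injective (transferOp_smul (φ := φ) c f)

lemma monotone_transferEnd (hφ : Continuous φ) : Monotone (transferEnd hφ) := fun _ _ hfg =>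
  transferOp_mono (φ := φ) hfg

lemma coe_transferEnd_pow (hφ : Continuous φ) (n : ℕ) (f : C(SigmaA l A, ℝ)) :
    ⇑((transferEnd hφ ^ n) f) = (transferOp A φ)^[n] f := by
  induction n with
  | zero => rfl
  | succ n ih =>
    rw [pow_succ', Module.End.mul_apply, Function.iterate_succ_apply', ← ih]
    rfl

lemma transferEnd_one_pos (hφ : Continuous φ) (hA : IsIrreducible A) (ω : SigmaA l A) :
    0 < transferEnd hφ 1 ω := by
  obtain ⟨υ, rfl⟩ := hA.surjective_shift ω
  calc 0 < Real.exp (φ υ) * 1 := by positivity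
    _ ≤ transferEnd hφ 1 (shift υ) := exp_mul_le_transferOp_shift zero_le_one υ

end ContinuousTransferOperator

namespace HarnackInequality

variable {K : ℝ} {M : ℕ}

lemma exists_pow_one_le (hH : HarnackInequality φ K M) (hφ : Continuous φ) :
    ∃ D, ∀ n ω υ, (transferEnd hφ ^ n) 1 ω ≤ D * (transferEnd hφ ^ n) 1 υ := by
  refine ⟨|K| * ∑ j ∈ Finset.range M, ‖(transferEnd hφ ^ j) 1‖, fun n ω υ => ?_⟩
  calc (transferEnd hφ ^ n) 1 ω
      ≤ K * ∑ j ∈ Finset.range M, (transferEnd hφ ^ (j + n)) 1 υ := by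
        simpa only [coe_transferEnd_pow, ContinuousMap.coe_one] using
          hH n 1 1 (fun _ => zero_le_one) (fun _ _ _ => le_rfl) ω υ
    _ ≤ |K| * ∑ j ∈ Finset.range M, (transferEnd hφ ^ (j + n)) 1 υ := by
        gcongr
        · exact Finset.sum_nonneg fun j _ => by
            rw [coe_transferEnd_pow]
            exact iterate_transferOp_nonneg (j + n) (fun _ => zero_le_one) υ
        · exact le_abs_self K
    _ ≤ |K| * ∑ j ∈ Finset.range M, ‖(transferEnd hφ ^ j) 1‖ * (transferEnd hφ ^ n) 1 υ := by
        gcongr with j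
        exact pow_add_one_le (monotone_transferEnd hφ) j n υ
    _ = _ := by rw [← Finset.sum_mul, mul_assoc]

lemma exists_pow_le_sum (hH : HarnackInequality φ K M) (hφ : Continuous φ) {f : C(SigmaA l A, ℝ)}
    (hf : 0 ≤ f) {ε : ℝ} (hε : 0 < ε) :
    ∃ n, ∀ ω υ, (transferEnd hφ ^ n) f ω
      ≤ K * ∑ j ∈ Finset.range M, (transferEnd hφ ^ (j + n)) (f + ε • 1) υ := by
  obtain ⟨n, hn⟩ := exists_forall_mem_cylinder_le_add f.continuous hε
  refine ⟨n, fun ω υ => ?_⟩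
  simp only [coe_transferEnd_pow]
  refine hH n f _ (fun ω => ?_) (fun ω υ hmem => ?_) ω υ
  · simpa using add_nonneg (hf ω) hε.le
  · simpa using hn ω υ hmem

end HarnackInequality

section Integration

variable {X : Type*} [TopologicalSpace X] [CompactSpace X] [MeasurableSpace X]

/-- Integration against a finite measure as a linear functional on continuous functions. -/
noncomputable def integralFunctional [OpensMeasurableSpace X] (μ : Measure X)
    [IsFiniteMeasure μ] : C(X, ℝ) →ₗ[ℝ] ℝ where
  toFun f := ∫ x, f x ∂μ
  map_add' f g := integral_add
    (f.continuous.integrable_of_hasCompactSupport (.of_compactSpace f))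
    (g.continuous.integrable_of_hasCompactSupport (.of_compactSpace g))
  map_smul' c _ := integral_const_mul c _

lemma integralFunctional_one [OpensMeasurableSpace X] (μ : Measure X) [IsProbabilityMeasure μ] :
    integralFunctional μ 1 = 1 := by
  simp [integralFunctional]

lemma monotone_integralFunctional [OpensMeasurableSpace X] (μ : Measure X) [IsFiniteMeasure μ] :
    Monotone (integralFunctional μ) :=
  (monotone_iff_map_nonneg _).2 fun _ hf => integral_nonneg hf

lemma integralFunctional_injective [BorelSpace X] [HasOuterApproxClosed X] {μ ν : Measure X}
    [IsFiniteMeasure μ] [IsFiniteMeasure ν] (h : integralFunctional μ = integralFunctional ν) :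
    μ = ν :=
  ext_of_forall_integral_eq_of_IsFiniteMeasure fun f => LinearMap.congr_fun h f.toContinuousMap

open CompactlySupported in
lemma exists_isProbabilityMeasure_integralFunctional_eq [T2Space X] [BorelSpace X]
    {Λ : C(X, ℝ) →ₗ[ℝ] ℝ} (hΛ : Monotone Λ) (hone : Λ 1 = 1) :
    ∃ (μ : Measure X) (_ : IsProbabilityMeasure μ), integralFunctional μ = Λ := by
  let T : C_c(X, ℝ) →ₗ[ℝ] ℝ :=
    { toFun := fun f => Λ f.toContinuousMap
      map_add' := fun f g => map_add Λ f.toContinuousMap g.toContinuousMap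
      map_smul' := fun c f => map_smul Λ c f.toContinuousMap }
  let P : C_c(X, ℝ) →ₚ[ℝ] ℝ := PositiveLinearMap.mk₀ T fun f hf =>
    (map_zero Λ).symm.trans_le (hΛ hf)
  have hintegral : ∀ f : C(X, ℝ), ∫ x, f x ∂(RealRMK.rieszMeasure P) = Λ f := fun f =>
    RealRMK.integral_rieszMeasure P (CompactlySupportedContinuousMap.continuousMapEquiv f)
  refine ⟨RealRMK.rieszMeasure P, ⟨(ENNReal.toReal_eq_one_iff _).1 ?_⟩, LinearMap.ext hintegral⟩
  simpa [hone, Measure.real] using hintegral 1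

end Integration

section Gibbs

lemma cylinder_wordPrefix (ω : SigmaA l A) (k : ℕ) :
    cylinder A (wordPrefix ω k) = Subtype.val ⁻¹' PiNat.cylinder ω.1 k := by
  ext υ
  simp [cylinder, wordPrefix]

lemma isGibbs_log_of_le {μ : Measure (SigmaA l A)} {r C₁ C₂ : ℝ} (hr : 0 < r)
    (hupper : ∀ (ω : SigmaA l A) k, r ^ k * μ.real (cylinder A (wordPrefix ω k))
      ≤ C₁ * Real.exp (birkhoff φ k ω))
    (hlower : ∀ (ω : SigmaA l A) k, Real.exp (birkhoff φ k ω)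
      ≤ C₂ * (r ^ k * μ.real (cylinder A (wordPrefix ω k)))) :
    IsGibbs φ (Real.log r) μ := by
  refine ⟨2 + |C₁| + |C₂|, by linarith [abs_nonneg C₁, abs_nonneg C₂], fun ω k _ => ?_⟩
  have hratio : (μ (cylinder A (wordPrefix ω k))).toReal /
        Real.exp (birkhoff φ k ω - k * Real.log r)
      = r ^ k * μ.real (cylinder A (wordPrefix ω k)) / Real.exp (birkhoff φ k ω) := by
    rw [Real.exp_sub, Real.exp_nat_mul, Real.exp_log hr, div_div_eq_mul_div, mul_comm, Measure.real]
  have hmass : 0 ≤ r ^ k * μ.real (cylinder A (wordPrefix ω k)) := by positivity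
  rw [hratio, inv_le_iff_one_le_mul₀ (by positivity), div_mul_eq_mul_div, mul_comm,
    one_le_div (Real.exp_pos _), div_le_iff₀ (Real.exp_pos _)]
  constructor
  · refine (hlower ω k).trans (mul_le_mul_of_nonneg_right ?_ hmass)
    linarith [le_abs_self C₂, abs_nonneg C₁]
  · refine (hupper ω k).trans (mul_le_mul_of_nonneg_right ?_ (Real.exp_pos _).le)
    linarith [le_abs_self C₁, abs_nonneg C₂]

/-- The indicator function of the cylinder of the first `n` letters of `ω`. -/
noncomputable def cylinderIndicator (ω : SigmaA l A) (n : ℕ) : C(SigmaA l A, ℝ) :=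
  ⟨(Subtype.val ⁻¹' PiNat.cylinder ω.1 n).indicator 1,
    (isClopen_cylinder ω n).continuous_indicator continuous_one⟩

lemma cylinderIndicator_nonneg (ω : SigmaA l A) (n : ℕ) : 0 ≤ ⇑(cylinderIndicator ω n) :=
  Set.indicator_nonneg fun _ _ => zero_le_one

lemma cylinderIndicator_le_of_mem_cylinder (ω : SigmaA l A) (n : ℕ) {υ ζ : SigmaA l A}
    (h : υ.1 ∈ PiNat.cylinder ζ.1 (n + 1)) : cylinderIndicator ω n υ ≤ cylinderIndicator ω n ζ := by
  by_cases hυ : υ.1 ∈ PiNat.cylinder ω.1 n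
  · have hζ : ζ.1 ∈ PiNat.cylinder ω.1 n := fun i hi =>
      (h i (hi.trans n.lt_succ_self)).symm.trans (hυ i hi)
    simp [cylinderIndicator, Set.indicator, hυ, hζ]
  · simpa [cylinderIndicator, Set.indicator, hυ] using cylinderIndicator_nonneg ω n ζ

lemma integralFunctional_cylinderIndicator (μ : Measure (SigmaA l A)) [IsFiniteMeasure μ]
    (ω : SigmaA l A) (n : ℕ) :
    integralFunctional μ (cylinderIndicator ω n) = μ.real (cylinder A (wordPrefix ω n)) := by
  rw [cylinder_wordPrefix]
  exact integral_indicator_one (isClopen_cylinder ω n).isOpen.measurableSet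

namespace IsPosEigenfunctional

variable {hφ : Continuous φ} {r : ℝ} {μ : Measure (SigmaA l A)} [IsProbabilityMeasure μ]

lemma pow_mul_measure_cylinder_le {V : ℝ}
    (h : IsPosEigenfunctional (transferEnd hφ) r (integralFunctional μ)) (hV : BowenCondition φ V)
    (ω : SigmaA l A) (k : ℕ) :
    r ^ k * μ.real (cylinder A (wordPrefix ω k)) ≤ Real.exp V * Real.exp (birkhoff φ k ω) := by
  have hle : (transferEnd hφ ^ k) (cylinderIndicator ω k)
      ≤ (Real.exp V * Real.exp (birkhoff φ k ω)) • 1 := fun υ => by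
    simpa [coe_transferEnd_pow, cylinderIndicator] using
      hV.iterate_transferOp_indicator_le k ω υ
  simpa [h.map_pow_apply, integralFunctional_cylinderIndicator, integralFunctional_one] using
    h.monotone hle

lemma exp_birkhoff_le_mul_measure_cylinder {K : ℝ} {M : ℕ}
    (h : IsPosEigenfunctional (transferEnd hφ) r (integralFunctional μ))
    (hH : HarnackInequality φ K M) (ω : SigmaA l A) (k : ℕ) :
    Real.exp (birkhoff φ k ω) ≤ K * (∑ j ∈ Finset.range M, r ^ j) *
      (r ^ k * μ.real (cylinder A (wordPrefix ω k))) := by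
  have hle : Real.exp (birkhoff φ k ω) • 1
      ≤ K • ∑ j ∈ Finset.range M, (transferEnd hφ ^ (j + k)) (cylinderIndicator ω k) := fun υ => by
    calc Real.exp (birkhoff φ k ω) * 1
        = Real.exp (birkhoff φ k ω) * cylinderIndicator ω k ω := by
          simp [cylinderIndicator]
      _ ≤ (transferOp A φ)^[k] (cylinderIndicator ω k) (shift^[k] ω) :=
          exp_birkhoff_mul_le_iterate_transferOp (cylinderIndicator_nonneg ω k) k ω
      _ ≤ _ := by
          simpa [coe_transferEnd_pow] using hH k _ _ (cylinderIndicator_nonneg ω k)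
            (fun _ _ hmem => cylinderIndicator_le_of_mem_cylinder ω k hmem) (shift^[k] ω) υ
  have := h.monotone hle
  rw [h.map_smul_sum_pow, map_smul, integralFunctional_one,
    integralFunctional_cylinderIndicator, smul_eq_mul, mul_one] at this
  exact this.trans_eq (by ring)

end IsPosEigenfunctional

end Gibbs

lemma isPosEigenfunctional_integralFunctional (hφ : Continuous φ) {r : ℝ}
    {μ : Measure (SigmaA l A)} [IsFiniteMeasure μ] :
    IsPosEigenfunctional (transferEnd hφ) r (integralFunctional μ) ↔
      ∀ f : SigmaA l A → ℝ, Continuous f →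
        ∫ ω, transferOp A φ f ω ∂μ = r * ∫ ω, f ω ∂μ :=
  ⟨fun h f hf => h.map_apply ⟨f, hf⟩,
    fun h => ⟨monotone_integralFunctional μ, fun f => h f f.continuous⟩⟩

theorem transfer_dual_eigenmeasure_general (hl : 0 < l) (hA : IsIrreducible A)
    (hφ : Continuous φ) {V : ℝ} (hV : BowenCondition φ V) :
    ∃ (lam : ℝ) (μ : Measure (SigmaA l A)), 0 < lam ∧ IsProbabilityMeasure μ ∧
      (∀ f : SigmaA l A → ℝ, Continuous f →
        ∫ ω, transferOp A φ f ω ∂μ = lam * ∫ ω, f ω ∂μ) ∧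
      IsGibbs φ (Real.log lam) μ ∧
      ∀ (lam' : ℝ) (μ' : Measure (SigmaA l A)), 0 < lam' → IsProbabilityMeasure μ' →
        (∀ f : SigmaA l A → ℝ, Continuous f →
          ∫ ω, transferOp A φ f ω ∂μ' = lam' * ∫ ω, f ω ∂μ') →
        lam' = lam ∧ μ' = μ := by
  have := hA.nonempty_sigmaA hl
  obtain ⟨K, M, hH⟩ := hV.exists_harnackInequality hA hφ
  obtain ⟨D, hone⟩ := hH.exists_pow_one_le hφ
  obtain ⟨lam, hlam, Λ, hΛ, hΛ1⟩ := exists_isPosEigenfunctional (monotone_transferEnd hφ)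
    (transferEnd_one_pos hφ hA) hone
  obtain ⟨μ, hμ, hμΛ⟩ := exists_isProbabilityMeasure_integralFunctional_eq hΛ.monotone hΛ1
  subst hμΛ
  refine ⟨lam, μ, hlam, hμ, (isPosEigenfunctional_integralFunctional hφ).1 hΛ,
    isGibbs_log_of_le hlam (hΛ.pow_mul_measure_cylinder_le hV)
      (hΛ.exp_birkhoff_le_mul_measure_cylinder hH), fun lam' μ' hlam' hμ' h' => ?_⟩
  obtain ⟨rfl, heq⟩ := hΛ.unique hone (fun f hf ε hε => hH.exists_pow_le_sum hφ hf hε) hlam hlam'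
    ((isPosEigenfunctional_integralFunctional hφ).2 h') hΛ1 (integralFunctional_one μ')
  exact ⟨rfl, integralFunctional_injective heq⟩

/-- There is a unique `λ > 0` and a unique Borel probability measure `μ`
with `∫ L_φ f dμ = λ ∫ f dμ` for all continuous `f`; this `μ` is a Gibbs measure for `φ`
with pressure `P = ln λ`. -/
theorem transfer_dual_eigenmeasure
    (hl : 2 ≤ l) (A : Matrix (Fin l) (Fin l) ℕ) (hA : Primitive A)
    (φ : SigmaA l A → ℝ) (hφ : HolderCont φ) :
    ∃ (lam : ℝ) (μ : Measure (SigmaA l A)), 0 < lam ∧ IsProbabilityMeasure μ ∧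
      (∀ f : SigmaA l A → ℝ, Continuous f →
        ∫ ω, transferOp A φ f ω ∂μ = lam * ∫ ω, f ω ∂μ) ∧
      IsGibbs φ (Real.log lam) μ ∧
      ∀ (lam' : ℝ) (μ' : Measure (SigmaA l A)), 0 < lam' → IsProbabilityMeasure μ' →
        (∀ f : SigmaA l A → ℝ, Continuous f →
          ∫ ω, transferOp A φ f ω ∂μ' = lam' * ∫ ω, f ω ∂μ') →
        lam' = lam ∧ μ' = μ := by
  obtain ⟨V, hV⟩ := hφ.exists_bowenCondition
  exact transfer_dual_eigenmeasure_general (by omega) hA.isIrreducible hφ.continuous hV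

end SFT
end

section
/- Let (Ω, F, P) be a probability space, T : Ω → Ω a measure-preserving transformation, and Y : Ω → [0, ∞) an integrable random variable with E(1/Y) < ∞ (so Y > 0 almost surely). For k ∈ ℕ set Y_k := Y∘T^{k−1} (a stationary sequence) and S_k := Y_1 + ⋯ + Y_k, and for t > 0 let N_t := sup{ k ∈ ℕ : S_k ≤ t }. Let Ŷ := lim_{k→∞} S_k / k, which exists almost surely by Birkhoff's ergodic theorem and is strictly positive almost surely. Then N_t / t converges to 1/Ŷ in L¹-norm as t → ∞, i.e. lim_{t→∞} E | N_t/t − 1/Ŷ | = 0. -/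
open MeasureTheory Filter

/-!
By Jensen's inequality, a convex function of the ergodic averages `Aₖ = Sₖ / k` has expectation at
most that of the same function of `Y`. The affine function `y ↦ 2 - y / a`, whose positive part is
at least `1` on `y ≤ a` and at most `2 · 1_{y ≤ 2a}` on `y ≥ 0`, gives `P(Aₖ ≤ a) ≤ 2 P(Y ≤ 2a)`.
As `x ≤ N_t / t` forces `Aₖ ≤ 1 / x` for `k = ⌈x t⌉`, the tails of `N_t / t` are at most twice
those of the integrable variable `2 / Y`, uniformly in `t`. Hence `N_t / t` is uniformly integrable,
and Vitali's theorem upgrades the pathwise convergence `N_t / t → 1 / Ŷ` to convergence in `L¹`.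
That `Ŷ > 0` follows from `E(1 / Ŷ) ≤ E(1 / Y)`, which is Jensen for `y ↦ 1 / y` and Fatou's lemma.
-/

section RenewalCount

variable {α : Type*} [LinearOrder α] {S : ℕ → α} {t : α} {k : ℕ}

/-- The renewal counting function `N_t = sup {k ≥ 1 : S_k ≤ t}` of a sequence of renewal times.
It is `0` both when no renewal has occurred by time `t` and, by the convention for `sSup` on `ℕ`,
when infinitely many have. -/
noncomputable def renewalCount (S : ℕ → α) (t : α) : ℕ :=
  sSup {k : ℕ | 0 < k ∧ S k ≤ t}

theorem le_renewalCount [NoMaxOrder α] (hS : Tendsto S atTop atTop) (hk : 0 < k) (h : S k ≤ t) :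
    k ≤ renewalCount S t := by
  obtain ⟨m, hm⟩ := eventually_atTop.1 (hS.eventually_gt_atTop t)
  refine le_csSup ⟨m, fun j hj => ?_⟩ ⟨hk, h⟩
  by_contra! hmj
  exact (hm j hmj.le).not_ge hj.2

theorem apply_le_of_le_renewalCount (hS : Monotone S) (hk : 0 < k) (h : k ≤ renewalCount S t) :
    S k ≤ t := by
  have hN : sSup {k : ℕ | 0 < k ∧ S k ≤ t} ≠ 0 := (hk.trans_le h).ne'
  have hne : {k : ℕ | 0 < k ∧ S k ≤ t}.Nonempty :=
    Set.nonempty_iff_ne_empty.2 fun h0 => hN (by rw [h0, csSup_empty, Nat.bot_eq_zero])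
  have hbdd : BddAbove {k : ℕ | 0 < k ∧ S k ≤ t} :=
    not_imp_comm.1 Nat.sSup_of_not_bddAbove hN
  exact (hS h).trans (Nat.sSup_mem hne hbdd).2

theorem lt_apply_renewalCount_add_one [NoMaxOrder α] (hS : Tendsto S atTop atTop) (t : α) :
    t < S (renewalCount S t + 1) := by
  by_contra! h
  exact (Nat.lt_succ_self _).not_ge (le_renewalCount hS (Nat.succ_pos _) h)

theorem tendsto_renewalCount_atTop [NoMaxOrder α] (hS : Tendsto S atTop atTop) :
    Tendsto (renewalCount S) atTop atTop := by
  refine tendsto_atTop.2 fun m => ?_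
  filter_upwards [eventually_ge_atTop (S (m + 1))] with t ht
  exact m.le_succ.trans (le_renewalCount hS m.succ_pos ht)

theorem renewalCount_eq_iSup [∀ k, Decidable (S k ≤ t)] :
    renewalCount S t = ⨆ k, if S k ≤ t then k else 0 := by
  have hrange : Set.range (fun k => if S k ≤ t then k else 0) =
      insert 0 {k : ℕ | 0 < k ∧ S k ≤ t} := by
    ext k
    simp only [Set.mem_range, Set.mem_insert_iff, Set.mem_ofPred_eq]
    grind
  rw [iSup, hrange, renewalCount]
  by_cases hbdd : BddAbove {k : ℕ | 0 < k ∧ S k ≤ t}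
  · rw [csSup_insert' hbdd, Nat.zero_max]
  · rw [Nat.sSup_of_not_bddAbove hbdd, Nat.sSup_of_not_bddAbove (by rwa [bddAbove_insert])]

theorem measurable_renewalCount [TopologicalSpace α] [ClosedIicTopology α] [MeasurableSpace α]
    [OpensMeasurableSpace α] (t : α) : Measurable fun S : ℕ → α => renewalCount S t := by
  simp only [renewalCount_eq_iSup]
  exact Measurable.iSup fun k =>
    Measurable.ite (measurable_pi_apply k measurableSet_Iic) measurable_const measurable_const

end RenewalCount

section Deterministic

variable {S : ℕ → ℝ} {y : ℝ}

theorem tendsto_atTop_of_tendsto_div_natCast (hy : 0 < y)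
    (h : Tendsto (fun k : ℕ => S k / k) atTop (nhds y)) : Tendsto S atTop atTop := by
  refine (h.pos_mul_atTop hy tendsto_natCast_atTop_atTop).congr' ?_
  filter_upwards [eventually_ne_atTop 0] with k hk
  exact div_mul_cancel₀ _ (Nat.cast_ne_zero.2 hk)

theorem tendsto_succ_div_natCast (h : Tendsto (fun k : ℕ => S k / k) atTop (nhds y)) :
    Tendsto (fun k : ℕ => S (k + 1) / k) atTop (nhds y) := by
  have hratio : Tendsto (fun k : ℕ => 1 + (k : ℝ)⁻¹) atTop (nhds 1) := by
    simpa only [add_zero] using tendsto_const_nhds.add (tendsto_inv_atTop_nhds_zero_nat (𝕜 := ℝ))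
  have hprod := ((tendsto_add_atTop_iff_nat 1).2 h).mul hratio
  rw [mul_one] at hprod
  refine hprod.congr' ?_
  filter_upwards [eventually_gt_atTop 0] with k hk
  push_cast
  field_simp

theorem tendsto_renewalCount_div (hS : Monotone S) (hy : 0 < y)
    (h : Tendsto (fun k : ℕ => S k / k) atTop (nhds y)) :
    Tendsto (fun t => (renewalCount S t : ℝ) / t) atTop (nhds y⁻¹) := by
  have hlim := tendsto_atTop_of_tendsto_div_natCast hy h
  have hN := tendsto_renewalCount_atTop hlim
  have hinv : Tendsto (fun t => t / (renewalCount S t : ℝ)) atTop (nhds y) := by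
    refine tendsto_of_tendsto_of_tendsto_of_le_of_le' (h.comp hN)
      ((tendsto_succ_div_natCast h).comp hN) ?_ (Eventually.of_forall fun t => ?_)
    · filter_upwards [hN.eventually_gt_atTop 0] with t ht
      exact div_le_div_of_nonneg_right (apply_le_of_le_renewalCount hS ht le_rfl)
        (Nat.cast_nonneg _)
    · exact div_le_div_of_nonneg_right (lt_apply_renewalCount_add_one hlim t).le
        (Nat.cast_nonneg _)
  exact (hinv.inv₀ hy.ne').congr fun t => inv_div _ _

end Deterministic

section UniformIntegrability

variable {Ω E F ι : Type*} [NormedAddCommGroup E] [NormedAddCommGroup F]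

theorem setOf_le_norm_indicator_norm_ge {f : Ω → E} {M x : ℝ} (hx : 0 < x) :
    {ω | x ≤ ‖{ω | M ≤ ‖f ω‖}.indicator f ω‖} = {ω | max x M ≤ ‖f ω‖} := by
  ext ω
  by_cases h : M ≤ ‖f ω‖ <;> simp [h, hx]

variable [MeasurableSpace Ω] {μ : Measure Ω}

theorem eLpNorm_one_le_of_measure_norm_ge_le {f : Ω → E} {g : Ω → F}
    (hf : AEStronglyMeasurable f μ) (hg : AEStronglyMeasurable g μ) {C : ENNReal} (hC : C ≠ ⊤)
    (h : ∀ x, 0 < x → μ {ω | x ≤ ‖f ω‖} ≤ C * μ {ω | x ≤ ‖g ω‖}) :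
    eLpNorm f 1 μ ≤ C * eLpNorm g 1 μ := by
  simp only [eLpNorm_one_eq_lintegral_enorm, ← ofReal_norm]
  rw [lintegral_eq_lintegral_meas_le μ (ae_of_all _ fun _ => norm_nonneg _) hf.norm.aemeasurable,
    lintegral_eq_lintegral_meas_le μ (ae_of_all _ fun _ => norm_nonneg _) hg.norm.aemeasurable,
    ← lintegral_const_mul' _ _ hC]
  exact setLIntegral_mono' measurableSet_Ioi h

theorem eLpNorm_one_indicator_norm_ge_le_of_measure_norm_ge_le {f : Ω → E} {g : Ω → F}
    (hf : AEStronglyMeasurable f μ) (hg : AEStronglyMeasurable g μ) {C : ENNReal} (hC : C ≠ ⊤)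
    (h : ∀ x, 0 < x → μ {ω | x ≤ ‖f ω‖} ≤ C * μ {ω | x ≤ ‖g ω‖}) (M : ℝ) :
    eLpNorm ({ω | M ≤ ‖f ω‖}.indicator f) 1 μ ≤
      C * eLpNorm ({ω | M ≤ ‖g ω‖}.indicator g) 1 μ := by
  refine eLpNorm_one_le_of_measure_norm_ge_le
    (hf.indicator₀ (nullMeasurableSet_le aemeasurable_const hf.norm.aemeasurable))
    (hg.indicator₀ (nullMeasurableSet_le aemeasurable_const hg.norm.aemeasurable)) hC
    fun x hx => ?_
  rw [setOf_le_norm_indicator_norm_ge hx, setOf_le_norm_indicator_norm_ge hx]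
  exact h _ (lt_max_of_lt_left hx)

theorem tendsto_integral_norm_of_tendsto_eLpNorm_one {l : Filter ι} {f : ι → Ω → E}
    (h : Tendsto (fun i => eLpNorm (f i) 1 μ) l (nhds 0)) :
    Tendsto (fun i => ∫ ω, ‖f i ω‖ ∂μ) l (nhds 0) := by
  refine squeeze_zero (fun i => integral_nonneg fun ω => norm_nonneg _) (fun i => ?_)
    ((ENNReal.tendsto_toReal ENNReal.zero_ne_top).comp h)
  simpa only [Function.comp_apply, eLpNorm_one_eq_lintegral_enorm, ofReal_norm, norm_norm] using
    (le_abs_self _).trans (norm_integral_le_lintegral_norm (μ := μ) fun ω => ‖f i ω‖)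

variable [IsFiniteMeasure μ]

theorem uniformIntegrable_of_measure_norm_ge_le {f : ι → Ω → E} {g : Ω → F}
    (hf : ∀ i, AEStronglyMeasurable (f i) μ) (hg : MemLp g 1 μ) {C : ENNReal} (hC : C ≠ ⊤)
    (h : ∀ i x, 0 < x → μ {ω | x ≤ ‖f i ω‖} ≤ C * μ {ω | x ≤ ‖g ω‖}) :
    UniformIntegrable f 1 μ := by
  refine uniformIntegrable_of le_rfl ENNReal.one_ne_top hf fun ε hε => ?_
  have hC' : 0 < C.toReal + 1 := by positivity
  obtain ⟨M, hM⟩ := (uniformIntegrable_const (ι := Unit) le_rfl ENNReal.one_ne_top hg).spec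
    one_ne_zero ENNReal.one_ne_top (div_pos hε hC')
  refine ⟨M, fun i => ?_⟩
  calc eLpNorm ({ω | M ≤ ‖f i ω‖₊}.indicator (f i)) 1 μ
      ≤ C * eLpNorm ({ω | M ≤ ‖g ω‖₊}.indicator g) 1 μ :=
        eLpNorm_one_indicator_norm_ge_le_of_measure_norm_ge_le (hf i) hg.1 hC (h i) M
    _ ≤ ENNReal.ofReal C.toReal * ENNReal.ofReal (ε / (C.toReal + 1)) := by
        rw [ENNReal.ofReal_toReal hC]
        gcongr
        exact hM ()
    _ ≤ ENNReal.ofReal ε := by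
        rw [← ENNReal.ofReal_mul ENNReal.toReal_nonneg]
        refine ENNReal.ofReal_le_ofReal ?_
        rw [mul_div_assoc', div_le_iff₀ hC']
        nlinarith

theorem tendsto_eLpNorm_sub_of_uniformIntegrable_of_ae_tendsto {l : Filter ι} [l.NeBot]
    [l.IsCountablyGenerated] {p : ENNReal} (hp : 1 ≤ p) (hp_top : p ≠ ⊤) {f : ι → Ω → E}
    {g : Ω → E} (hf : UniformIntegrable f p μ)
    (hfg : ∀ᵐ ω ∂μ, Tendsto (fun i => f i ω) l (nhds (g ω))) :
    Tendsto (fun i => eLpNorm (f i - g) p μ) l (nhds 0) := by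
  refine tendsto_of_seq_tendsto fun u hu => ?_
  refine tendsto_Lp_finite_of_tendsto_ae hp hp_top (fun n => hf.1 (u n))
    (hf.memLp_of_ae_tendsto hfg) (fun ε hε => ?_) (hfg.mono fun ω hω => hω.comp hu)
  obtain ⟨δ, hδ, hδf⟩ := hf.2.1 hε
  exact ⟨δ, hδ, fun n => hδf (u n)⟩

end UniformIntegrability

section Inverse

variable {Ω : Type*} [MeasurableSpace Ω] {μ : Measure Ω} {Y : Ω → ℝ}

theorem ae_pos_of_lintegral_inv_ofReal_ne_top (hY : AEMeasurable Y μ)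
    (h : ∫⁻ ω, (ENNReal.ofReal (Y ω))⁻¹ ∂μ ≠ ⊤) : ∀ᵐ ω ∂μ, 0 < Y ω := by
  filter_upwards [ae_lt_top' hY.ennreal_ofReal.inv h] with ω hω
  simpa using hω

theorem integrable_inv_of_lintegral_inv_ofReal_ne_top (hY : AEMeasurable Y μ)
    (h : ∫⁻ ω, (ENNReal.ofReal (Y ω))⁻¹ ∂μ ≠ ⊤) : Integrable (fun ω => (Y ω)⁻¹) μ := by
  refine ⟨hY.inv.aestronglyMeasurable, ?_⟩
  have hpos := ae_pos_of_lintegral_inv_ofReal_ne_top hY h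
  rw [hasFiniteIntegral_iff_ofReal (hpos.mono fun ω hω => (inv_pos.2 hω).le),
    lintegral_congr_ae (hpos.mono fun ω hω => ENNReal.ofReal_inv_of_pos hω)]
  exact h.lt_top

end Inverse

section Birkhoff

variable {Ω : Type*} {T : Ω → Ω}

theorem monotone_birkhoffSum {M : Type*} [AddCommMonoid M] [PartialOrder M]
    [IsOrderedAddMonoid M] {Y : Ω → M} {ω : Ω} (h : ∀ i, 0 ≤ Y (T^[i] ω)) :
    Monotone fun k => birkhoffSum T Y k ω :=
  monotone_nat_of_le_succ fun k => by
    rw [birkhoffSum_succ]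
    exact le_add_of_nonneg_right (h k)

theorem birkhoffAverage_eq_birkhoffSum_div (Y : Ω → ℝ) (k : ℕ) (ω : Ω) :
    birkhoffAverage ℝ T Y k ω = birkhoffSum T Y k ω / k :=
  inv_mul_eq_div _ _

theorem birkhoffAverage_pos {Y : Ω → ℝ} {k : ℕ} (hk : k ≠ 0) {ω : Ω}
    (h : ∀ i, 0 < Y (T^[i] ω)) : 0 < birkhoffAverage ℝ T Y k ω :=
  mul_pos (by positivity)
    (Finset.sum_pos (fun i _ => h i) (Finset.nonempty_range_iff.2 hk))

theorem map_birkhoffAverage_le_of_convexOn {E : Type*} [AddCommGroup E] [Module ℝ E] {s : Set E}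
    {φ : E → ℝ} (hφ : ConvexOn ℝ s φ) {Y : Ω → E} {k : ℕ} (hk : k ≠ 0) {ω : Ω}
    (hmem : ∀ i, Y (T^[i] ω) ∈ s) :
    φ (birkhoffAverage ℝ T Y k ω) ≤ birkhoffAverage ℝ T (φ ∘ Y) k ω := by
  have hk' : (k : ℝ) ≠ 0 := Nat.cast_ne_zero.2 hk
  simpa only [birkhoffAverage, birkhoffSum, Finset.smul_sum, Function.comp_apply] using
    hφ.map_sum_le (t := Finset.range k) (w := fun _ => (k : ℝ)⁻¹) (p := fun i => Y (T^[i] ω))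
      (fun _ _ => by positivity) (by simp [hk']) (fun i _ => hmem i)

variable [MeasurableSpace Ω] {μ : Measure Ω}

theorem ae_forall_iterate {p : Ω → Prop} (hT : Measure.QuasiMeasurePreserving T μ μ)
    (h : ∀ᵐ ω ∂μ, p ω) : ∀ᵐ ω ∂μ, ∀ i, p (T^[i] ω) :=
  ae_all_iff.2 fun i => (hT.iterate i).ae h

theorem aemeasurable_birkhoffSum {M : Type*} [AddCommMonoid M] [MeasurableSpace M]
    [MeasurableAdd₂ M] {Y : Ω → M} (hT : Measure.QuasiMeasurePreserving T μ μ)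
    (hY : AEMeasurable Y μ) (k : ℕ) : AEMeasurable (birkhoffSum T Y k) μ :=
  Finset.aemeasurable_fun_sum _ fun i _ => hY.comp_quasiMeasurePreserving (hT.iterate i)

theorem lintegral_ofReal_birkhoffAverage_le {f : Ω → ℝ} (hT : MeasurePreserving T μ μ)
    (hf : AEMeasurable f μ) {k : ℕ} (hk : k ≠ 0) :
    ∫⁻ ω, ENNReal.ofReal (birkhoffAverage ℝ T f k ω) ∂μ ≤ ∫⁻ ω, ENNReal.ofReal (f ω) ∂μ := by
  have hiter (i : ℕ) : ∫⁻ ω, ENNReal.ofReal (f (T^[i] ω)) ∂μ = ∫⁻ ω, ENNReal.ofReal (f ω) ∂μ := by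
    have hmap := (hT.iterate i).map_eq
    rw [← lintegral_map' (f := fun ω => ENNReal.ofReal (f ω)) (hmap.symm ▸ hf.ennreal_ofReal)
      (hT.iterate i).aemeasurable, hmap]
  have hmeas (i : ℕ) : AEMeasurable (fun ω => ENNReal.ofReal (f (T^[i] ω))) μ :=
    (hf.comp_quasiMeasurePreserving (hT.iterate i).quasiMeasurePreserving).ennreal_ofReal
  calc ∫⁻ ω, ENNReal.ofReal (birkhoffAverage ℝ T f k ω) ∂μ
      ≤ ∫⁻ ω, (k : ENNReal)⁻¹ * ∑ i ∈ Finset.range k, ENNReal.ofReal (f (T^[i] ω)) ∂μ := by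
        refine lintegral_mono fun ω => ?_
        rw [birkhoffAverage, smul_eq_mul, ENNReal.ofReal_mul (by positivity),
          ENNReal.ofReal_inv_of_pos (by positivity), ENNReal.ofReal_natCast]
        gcongr
        exact Finset.le_sum_of_subadditive _ ENNReal.ofReal_zero.le
          (fun _ _ => ENNReal.ofReal_add_le) _ _
    _ = (k : ENNReal)⁻¹ * (k * ∫⁻ ω, ENNReal.ofReal (f ω) ∂μ) := by
        rw [lintegral_const_mul'' _ (Finset.aemeasurable_fun_sum _ fun i _ => hmeas i),
          lintegral_finsetSum' _ fun i _ => hmeas i]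
        simp only [hiter, Finset.sum_const, Finset.card_range, nsmul_eq_mul]
    _ = ∫⁻ ω, ENNReal.ofReal (f ω) ∂μ :=
        ENNReal.inv_mul_cancel_left (Nat.cast_ne_zero.2 hk) (ENNReal.natCast_ne_top k)

theorem lintegral_ofReal_map_birkhoffAverage_le_of_convexOn {E : Type*} [AddCommGroup E]
    [Module ℝ E] {s : Set E} {φ : E → ℝ} (hφ : ConvexOn ℝ s φ) {Y : Ω → E}
    (hT : MeasurePreserving T μ μ) (hφY : AEMeasurable (φ ∘ Y) μ) (hmem : ∀ᵐ ω ∂μ, Y ω ∈ s)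
    {k : ℕ} (hk : k ≠ 0) :
    ∫⁻ ω, ENNReal.ofReal (φ (birkhoffAverage ℝ T Y k ω)) ∂μ ≤
      ∫⁻ ω, ENNReal.ofReal (φ (Y ω)) ∂μ := by
  refine (lintegral_mono_ae ?_).trans (lintegral_ofReal_birkhoffAverage_le hT hφY hk)
  filter_upwards [ae_forall_iterate hT.quasiMeasurePreserving hmem] with ω hω
  exact ENNReal.ofReal_le_ofReal (map_birkhoffAverage_le_of_convexOn hφ hk hω)

variable {Y : Ω → ℝ}

theorem aemeasurable_birkhoffAverage (hT : Measure.QuasiMeasurePreserving T μ μ)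
    (hY : AEMeasurable Y μ) (k : ℕ) : AEMeasurable (birkhoffAverage ℝ T Y k) μ :=
  (aemeasurable_birkhoffSum hT hY k).const_smul (k : ℝ)⁻¹

theorem measure_birkhoffAverage_le_le (hT : MeasurePreserving T μ μ) (hY : AEMeasurable Y μ)
    (hY0 : ∀ᵐ ω ∂μ, 0 ≤ Y ω) {k : ℕ} (hk : k ≠ 0) {a : ℝ} (ha : 0 < a) :
    μ {ω | birkhoffAverage ℝ T Y k ω ≤ a} ≤ 2 * μ {ω | Y ω ≤ 2 * a} := by
  set φ : ℝ → ℝ := fun y => 2 - y / a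
  have hφ : ConvexOn ℝ Set.univ φ :=
    (convexOn_const 2 convex_univ).sub ((LinearMap.mulRight ℝ a⁻¹).concaveOn convex_univ)
  have hφm : Measurable φ := by fun_prop
  calc μ {ω | birkhoffAverage ℝ T Y k ω ≤ a}
      ≤ ∫⁻ ω, ENNReal.ofReal (φ (birkhoffAverage ℝ T Y k ω)) ∂μ := by
        refine meas_le_lintegral₀ (hφm.comp_aemeasurable
          (aemeasurable_birkhoffAverage hT.quasiMeasurePreserving hY k)).ennreal_ofReal
          fun ω (hω : _ ≤ a) => ENNReal.one_le_ofReal.2 ?_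
        change 1 ≤ 2 - birkhoffAverage ℝ T Y k ω / a
        linarith [(div_le_one ha).2 hω]
    _ ≤ ∫⁻ ω, ENNReal.ofReal (φ (Y ω)) ∂μ :=
        lintegral_ofReal_map_birkhoffAverage_le_of_convexOn hφ hT (hφm.comp_aemeasurable hY)
          (ae_of_all _ fun _ => Set.mem_univ _) hk
    _ ≤ ∫⁻ ω, {ω | Y ω ≤ 2 * a}.indicator (fun _ => 2) ω ∂μ := by
        refine lintegral_mono_ae ?_
        filter_upwards [hY0] with ω hω
        refine Set.le_indicator_apply (fun _ => ?_) fun h => ?_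
        · rw [← ENNReal.ofReal_ofNat]
          exact ENNReal.ofReal_le_ofReal (sub_le_self _ (div_nonneg hω ha.le))
        · exact (ENNReal.ofReal_of_nonpos (sub_nonpos.2 ((le_div_iff₀ ha).2 (not_le.1 h).le))).le
    _ = 2 * μ {ω | Y ω ≤ 2 * a} :=
        lintegral_indicator_const₀ (nullMeasurableSet_le hY aemeasurable_const) 2

theorem lintegral_inv_ofReal_birkhoffAverage_le (hT : MeasurePreserving T μ μ)
    (hY : AEMeasurable Y μ) {k : ℕ} (hk : k ≠ 0) :
    ∫⁻ ω, (ENNReal.ofReal (birkhoffAverage ℝ T Y k ω))⁻¹ ∂μ ≤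
      ∫⁻ ω, (ENNReal.ofReal (Y ω))⁻¹ ∂μ := by
  obtain htop | htop := eq_or_ne (∫⁻ ω, (ENNReal.ofReal (Y ω))⁻¹ ∂μ) ⊤
  · exact htop ▸ le_top
  have hconvex : ConvexOn ℝ (Set.Ioi 0) fun y : ℝ => y⁻¹ := by
    simpa only [zpow_neg_one] using convexOn_zpow (𝕜 := ℝ) (-1)
  have hYpos := ae_pos_of_lintegral_inv_ofReal_ne_top hY htop
  have hApos : ∀ᵐ ω ∂μ, 0 < birkhoffAverage ℝ T Y k ω := by
    filter_upwards [ae_forall_iterate hT.quasiMeasurePreserving hYpos] with ω hω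
    exact birkhoffAverage_pos hk hω
  calc ∫⁻ ω, (ENNReal.ofReal (birkhoffAverage ℝ T Y k ω))⁻¹ ∂μ
      = ∫⁻ ω, ENNReal.ofReal (birkhoffAverage ℝ T Y k ω)⁻¹ ∂μ :=
        lintegral_congr_ae (hApos.mono fun ω hω => (ENNReal.ofReal_inv_of_pos hω).symm)
    _ ≤ ∫⁻ ω, ENNReal.ofReal (Y ω)⁻¹ ∂μ :=
        lintegral_ofReal_map_birkhoffAverage_le_of_convexOn hconvex hT hY.inv hYpos hk
    _ = ∫⁻ ω, (ENNReal.ofReal (Y ω))⁻¹ ∂μ :=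
        lintegral_congr_ae (hYpos.mono fun ω hω => ENNReal.ofReal_inv_of_pos hω)

theorem lintegral_inv_ofReal_le_of_tendsto_birkhoffAverage (hT : MeasurePreserving T μ μ)
    (hY : AEMeasurable Y μ) {Yhat : Ω → ℝ}
    (h : ∀ᵐ ω ∂μ, Tendsto (fun k => birkhoffAverage ℝ T Y k ω) atTop (nhds (Yhat ω))) :
    ∫⁻ ω, (ENNReal.ofReal (Yhat ω))⁻¹ ∂μ ≤ ∫⁻ ω, (ENNReal.ofReal (Y ω))⁻¹ ∂μ := by
  have hA := aemeasurable_birkhoffAverage hT.quasiMeasurePreserving hY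
  calc ∫⁻ ω, (ENNReal.ofReal (Yhat ω))⁻¹ ∂μ
      = ∫⁻ ω, liminf (fun k => (ENNReal.ofReal (birkhoffAverage ℝ T Y k ω))⁻¹) atTop ∂μ :=
        lintegral_congr_ae (h.mono fun ω hω => (ENNReal.tendsto_ofReal hω).inv.liminf_eq.symm)
    _ ≤ liminf (fun k => ∫⁻ ω, (ENNReal.ofReal (birkhoffAverage ℝ T Y k ω))⁻¹ ∂μ) atTop :=
        lintegral_liminf_le' fun k => (hA k).ennreal_ofReal.inv
    _ ≤ liminf (fun _ : ℕ => ∫⁻ ω, (ENNReal.ofReal (Y ω))⁻¹ ∂μ) atTop :=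
        liminf_le_liminf ((eventually_ne_atTop 0).mono fun k hk =>
          lintegral_inv_ofReal_birkhoffAverage_le hT hY hk)
    _ = ∫⁻ ω, (ENNReal.ofReal (Y ω))⁻¹ ∂μ := liminf_const _

theorem ae_pos_of_tendsto_birkhoffAverage (hT : MeasurePreserving T μ μ) (hY : AEMeasurable Y μ)
    (hYinv : ∫⁻ ω, (ENNReal.ofReal (Y ω))⁻¹ ∂μ ≠ ⊤) {Yhat : Ω → ℝ}
    (h : ∀ᵐ ω ∂μ, Tendsto (fun k => birkhoffAverage ℝ T Y k ω) atTop (nhds (Yhat ω))) :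
    ∀ᵐ ω ∂μ, 0 < Yhat ω :=
  ae_pos_of_lintegral_inv_ofReal_ne_top
    (aemeasurable_of_tendsto_metrizable_ae atTop
      (aemeasurable_birkhoffAverage hT.quasiMeasurePreserving hY) h)
    (ne_top_of_le_ne_top hYinv (lintegral_inv_ofReal_le_of_tendsto_birkhoffAverage hT hY h))

end Birkhoff

section Renewal

variable {Ω : Type*} {T : Ω → Ω} {Y : Ω → ℝ}

theorem birkhoffAverage_ceil_le_inv_of_le_renewalCount_div {ω : Ω} (hY0 : ∀ i, 0 ≤ Y (T^[i] ω))
    {t x : ℝ} (ht : 0 < t) (hx : 0 < x)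
    (h : x ≤ (renewalCount (fun k => birkhoffSum T Y k ω) t : ℝ) / t) :
    birkhoffAverage ℝ T Y ⌈x * t⌉₊ ω ≤ x⁻¹ := by
  have hxt : 0 < x * t := mul_pos hx ht
  have hsum : birkhoffSum T Y ⌈x * t⌉₊ ω ≤ t :=
    apply_le_of_le_renewalCount (monotone_birkhoffSum hY0) (Nat.ceil_pos.2 hxt)
      (Nat.ceil_le.2 ((le_div_iff₀ ht).1 h))
  calc birkhoffAverage ℝ T Y ⌈x * t⌉₊ ω = birkhoffSum T Y ⌈x * t⌉₊ ω / ⌈x * t⌉₊ :=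
        birkhoffAverage_eq_birkhoffSum_div _ _ _
    _ ≤ t / (x * t) := div_le_div₀ ht.le hsum hxt (Nat.le_ceil _)
    _ = x⁻¹ := by field_simp

theorem tendsto_renewalCount_birkhoffSum_div {ω : Ω} (hY0 : ∀ i, 0 ≤ Y (T^[i] ω)) {y : ℝ}
    (hy : 0 < y) (h : Tendsto (fun k => birkhoffAverage ℝ T Y k ω) atTop (nhds y)) :
    Tendsto (fun t => (renewalCount (fun k => birkhoffSum T Y k ω) t : ℝ) / t) atTop
      (nhds y⁻¹) := by
  simp only [birkhoffAverage_eq_birkhoffSum_div] at h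
  exact tendsto_renewalCount_div (monotone_birkhoffSum hY0) hy h

variable [MeasurableSpace Ω] {μ : Measure Ω}

theorem aemeasurable_renewalCount_birkhoffSum (hT : Measure.QuasiMeasurePreserving T μ μ)
    (hY : AEMeasurable Y μ) (t : ℝ) :
    AEMeasurable (fun ω => renewalCount (fun k => birkhoffSum T Y k ω) t) μ :=
  (measurable_renewalCount t).comp_aemeasurable
    (aemeasurable_pi_lambda _ (aemeasurable_birkhoffSum hT hY))

theorem measure_le_renewalCount_div_le (hT : MeasurePreserving T μ μ) (hY : AEMeasurable Y μ)
    (hYpos : ∀ᵐ ω ∂μ, 0 < Y ω) {t x : ℝ} (ht : 0 < t) (hx : 0 < x) :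
    μ {ω | x ≤ (renewalCount (fun k => birkhoffSum T Y k ω) t : ℝ) / t} ≤
      2 * μ {ω | x ≤ 2 * (Y ω)⁻¹} := by
  have hY0 := hYpos.mono fun _ => le_of_lt
  calc μ {ω | x ≤ (renewalCount (fun k => birkhoffSum T Y k ω) t : ℝ) / t}
      ≤ μ {ω | birkhoffAverage ℝ T Y ⌈x * t⌉₊ ω ≤ x⁻¹} := by
        refine measure_mono_ae ?_
        filter_upwards [ae_forall_iterate hT.quasiMeasurePreserving hY0] with ω hω
        exact birkhoffAverage_ceil_le_inv_of_le_renewalCount_div hω ht hx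
    _ ≤ 2 * μ {ω | Y ω ≤ 2 * x⁻¹} :=
        measure_birkhoffAverage_le_le hT hY hY0 (Nat.ceil_pos.2 (mul_pos hx ht)).ne'
          (inv_pos.2 hx)
    _ ≤ 2 * μ {ω | x ≤ 2 * (Y ω)⁻¹} := by
        gcongr 2 * ?_
        refine measure_mono_ae ?_
        filter_upwards [hYpos] with ω hω (h : Y ω ≤ 2 * x⁻¹)
        change x ≤ 2 * (Y ω)⁻¹
        rw [← div_eq_mul_inv] at h ⊢
        exact (le_div_comm₀ hω hx).1 h

theorem uniformIntegrable_renewalCount_div [IsFiniteMeasure μ] (hT : MeasurePreserving T μ μ)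
    (hY : AEMeasurable Y μ) (hYinv : ∫⁻ ω, (ENNReal.ofReal (Y ω))⁻¹ ∂μ ≠ ⊤) :
    UniformIntegrable (fun (t : Set.Ioi (0 : ℝ)) ω =>
      (renewalCount (fun k => birkhoffSum T Y k ω) (t : ℝ) : ℝ) / t) 1 μ := by
  have hg : MemLp (fun ω => 2 * (Y ω)⁻¹) 1 μ :=
    memLp_one_iff_integrable.2
      ((integrable_inv_of_lintegral_inv_ofReal_ne_top hY hYinv).const_mul 2)
  have hYpos := ae_pos_of_lintegral_inv_ofReal_ne_top hY hYinv
  refine uniformIntegrable_of_measure_norm_ge_le (C := 2) (fun t => ?_) hg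
    ENNReal.ofNat_ne_top fun t x hx => ?_
  · have hN := aemeasurable_renewalCount_birkhoffSum hT.quasiMeasurePreserving hY (t : ℝ)
    exact (measurable_from_nat.comp_aemeasurable hN).div_const _ |>.aestronglyMeasurable
  · have ht : 0 < (t : ℝ) := t.2
    simp only [Real.norm_of_nonneg (div_nonneg (Nat.cast_nonneg _) ht.le)]
    refine (measure_le_renewalCount_div_le hT hY hYpos ht hx).trans ?_
    gcongr 2 * μ {ω | x ≤ ?_}
    exact Real.le_norm_self _

end Renewal

theorem renewal_counting_L1_convergence_general {Ω : Type*} [MeasurableSpace Ω] {P : Measure Ω}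
    [IsFiniteMeasure P] {T : Ω → Ω} (hT : MeasurePreserving T P P) {Y : Ω → ℝ}
    (hY : AEMeasurable Y P) (hYinv : ∫⁻ ω, (ENNReal.ofReal (Y ω))⁻¹ ∂P < ⊤) {Yhat : Ω → ℝ}
    (hYhat : ∀ᵐ ω ∂P, Tendsto (fun k => birkhoffAverage ℝ T Y k ω) atTop (nhds (Yhat ω))) :
    Tendsto
      (fun t : ℝ => eLpNorm
        (fun ω => (renewalCount (fun k => birkhoffSum T Y k ω) t : ℝ) / t - (Yhat ω)⁻¹) 1 P)
      atTop (nhds 0) := by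
  have hY0 := (ae_pos_of_lintegral_inv_ofReal_ne_top hY hYinv.ne).mono fun _ => le_of_lt
  refine tendsto_comp_val_Ioi_atTop.1 (tendsto_eLpNorm_sub_of_uniformIntegrable_of_ae_tendsto
    le_rfl ENNReal.one_ne_top (uniformIntegrable_renewalCount_div hT hY hYinv.ne) ?_)
  filter_upwards [hYhat, ae_pos_of_tendsto_birkhoffAverage hT hY hYinv.ne hYhat,
    ae_forall_iterate hT.quasiMeasurePreserving hY0] with ω hlim hpos hnonneg
  exact tendsto_comp_val_Ioi_atTop.2 (tendsto_renewalCount_birkhoffSum_div hnonneg hpos hlim)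

/-- Krengel–Röttger–Wacker. Let `T` preserve the probability measure `P`,
let `Y ≥ 0` be integrable with `E(1/Y) < ∞`, set `Y_k := Y ∘ T^{k-1}`,
`S_k := Y_1 + ⋯ + Y_k` and `N_t := sup{k ≥ 1 : S_k ≤ t}`, and let `Ŷ = lim_k S_k/k`
(which exists a.s. by Birkhoff's theorem and is a.s. strictly positive). Then
`N_t/t → 1/Ŷ` in `L¹`-norm as `t → ∞`. -/
theorem renewal_counting_L1_convergence
    {Ω : Type*} [MeasurableSpace Ω] (P : Measure Ω) [IsProbabilityMeasure P]
    (T : Ω → Ω) (hT : MeasurePreserving T P P)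
    (Y : Ω → ℝ) (hY0 : ∀ ω, 0 ≤ Y ω) (hYint : Integrable Y P)
    (hYinv : ∫⁻ ω, (ENNReal.ofReal (Y ω))⁻¹ ∂P < ⊤)
    (Yhat : Ω → ℝ)
    (hYhat : ∀ᵐ ω ∂P, Tendsto
      (fun k : ℕ => (∑ i ∈ Finset.range k, Y (T^[i] ω)) / (k : ℝ)) atTop (nhds (Yhat ω)))
    (hYhatpos : ∀ᵐ ω ∂P, 0 < Yhat ω) :
    Tendsto
      (fun t : ℝ => ∫ ω,
        |((sSup {k : ℕ | 0 < k ∧ ∑ i ∈ Finset.range k, Y (T^[i] ω) ≤ t} : ℕ) : ℝ) / t -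
          (Yhat ω)⁻¹| ∂P)
      atTop (nhds 0) := by
  simp only [← inv_mul_eq_div] at hYhat
  exact tendsto_integral_norm_of_tendsto_eLpNorm_one
    (renewal_counting_L1_convergence_general hT hYint.aemeasurable hYinv hYhat)
end
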